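/- arXiv:1211.2864 — 3 statements merged into one kernel-verified Lean document; each statement's English description precedes it below -/
import Mathlib

section
/- For every a ∈ ℤ/Mℤ, writing [P] for 1 if P holds and 0 otherwise: #{(i, j) ∈ T_1 × T_2 : i − j = a} = 2^{s−1}·[−a ∈ T_1] + 2^{s−1} − 2^{s−1}·[a = 0], and #{(i, j) ∈ T_1 × T_3 : i − j = a} = −2^{s−1}·[−a ∈ T_1] + 2^{s−1} − 2^{s−1}·[a = 0]; that is, T_1·T_2^{(−1)} = 2^{s−1}T_1^{(−1)} + 2^{s−1}ℤ/Mℤ − 2^{s−1} and T_1·T_3^{(−1)} = −2^{s−1}T_1^{(−1)} + 2^{s−1}ℤ/Mℤ − 2^{s−1} in the group ring ℤ[ℤ/Mℤ]. -/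
noncomputable section




open scoped BigOperators

/-- `M = 2^{2s} + 2^s + 1`. -/
abbrev Mof (s : ℕ) : ℕ := 2 ^ (2 * s) + 2 ^ s + 1

/-- The relative trace from `F` (of order `2^{3s}`) to its subfield `E` of order `2^s`:
`Tr_{F/E}(x) = x + x^{2^s} + x^{2^{2s}}`, viewed as a map `F → F`. -/
def trFE {F : Type*} [Field F] (s : ℕ) (x : F) : F :=
  x + x ^ (2 ^ s) + x ^ (2 ^ (2 * s))

/-- `ψ(x) = 1` if the absolute trace `Tr_{F/𝔽₂}(x) = 0`, and `-1` otherwise. -/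
def psi (F : Type*) [Field F] [Algebra (ZMod 2) F] (x : F) : ℤ :=
  if Algebra.trace (ZMod 2) F x = 0 then 1 else -1

/-- `ψ(cS) = ∑_{x ∈ S} ψ(c·x)`. -/
def psiSum (F : Type*) [Field F] [Algebra (ZMod 2) F] (c : F) (S : Set F) : ℤ :=
  ∑ᶠ x ∈ S, psi F (c * x)

/-- `D = {u ∈ F^× : Tr_{F/E}(u⁻¹) = 0}`. -/
def Dset (F : Type*) [Field F] (s : ℕ) : Set F :=
  {u | u ≠ 0 ∧ trFE s u⁻¹ = 0}

/-- `S_a = {u ∈ F^× : Tr_{F/E}(u^{2^s+1}) = 0 ∧ Tr_{F/E}(ω^a u) = 0}`. -/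
def Sa {F : Type*} [Field F] (s : ℕ) (ω : F) (a : ℤ) : Set F :=
  {u | u ≠ 0 ∧ trFE s (u ^ (2 ^ s + 1)) = 0 ∧ trFE s (ω ^ a * u) = 0}

/-- `T₁ ⊆ ℤ/Mℤ`: classes `a` with `|S_a| = 2^s - 1`. -/
def T1 {F : Type*} [Field F] (s : ℕ) (ω : F) : Set (ZMod (Mof s)) :=
  {x | (Sa s ω (x.val : ℤ)).ncard = 2 ^ s - 1}

/-- `T₂ ⊆ ℤ/Mℤ`: classes `a` with `|S_a| = 2(2^s - 1)`. -/
def T2 {F : Type*} [Field F] (s : ℕ) (ω : F) : Set (ZMod (Mof s)) :=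
  {x | (Sa s ω (x.val : ℤ)).ncard = 2 * (2 ^ s - 1)}

/-- `T₃ ⊆ ℤ/Mℤ`: classes `a` with `|S_a| = 0`. -/
def T3 {F : Type*} [Field F] (s : ℕ) (ω : F) : Set (ZMod (Mof s)) :=
  {x | (Sa s ω (x.val : ℤ)).ncard = 0}

/-- The cyclotomic class `C_i^{(M,K)} = {g^{i+Mt} : t ∈ ℤ}`. -/
def cyc {K : Type*} [Field K] (M : ℕ) (g : K) (i : ℤ) : Set K :=
  {x | ∃ t : ℤ, x = g ^ (i + (M : ℤ) * t)}

/-- `⋃_{i ∈ T} C_i^{(M,K)}` for a set `T ⊆ ℤ/Mℤ` of indices. -/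
def Rclass {K : Type*} [Field K] (s : ℕ) (g : K) (T : Set (ZMod (Mof s))) : Set K :=
  ⋃ i ∈ T, cyc (Mof s) g ((i.val : ℤ))

/-- The family `R_0 = {0}`, `R_k = ⋃_{i ∈ T_k} C_i^{(M,K)}`, `k = 1, 2, 3`. -/
def Rfam {F K : Type*} [Field F] [Field K] (s : ℕ) (ω : F) (g : K) : Fin 4 → Set K :=
  ![{0}, Rclass s g (T1 s ω), Rclass s g (T2 s ω), Rclass s g (T3 s ω)]

/-- Indicator `[P] = 1` if `P` holds, `0` otherwise. -/
def Ind (P : Prop) : ℤ := @ite ℤ P (Classical.propDecidable P) 1 0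

section aux
open scoped Classical
open Finset

variable {F : Type*} [Field F]

def tt (φ : F →+* F) (x : F) : F := x + φ x + φ (φ x)

def QQ (φ : F →+* F) (u : F) : F := tt φ (u * φ u)

lemma tt_add (φ : F →+* F) (x y : F) : tt φ (x + y) = tt φ x + tt φ y := by
  simp only [tt, map_add]; ring

lemma tt_smul (φ : F →+* F) (e x : F) (he : φ e = e) : tt φ (e * x) = e * tt φ x := by
  simp only [tt, map_mul, he]; ring

lemma tt_fix (φ : F →+* F) (h3 : ∀ x, φ (φ (φ x)) = x) (x : F) : φ (tt φ x) = tt φ x := by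
  simp only [tt, map_add, h3]; ring

lemma QQ_smul (φ : F →+* F) (e x : F) (he : φ e = e) : QQ φ (e * x) = e ^ 2 * QQ φ x := by
  simp only [QQ, tt, map_mul, he]; ring

lemma QQ_add (φ : F →+* F) (h3 : ∀ x, φ (φ (φ x)) = x) (e x u : F) (he : φ e = e) :
    QQ φ (x + e * u) = QQ φ x + e ^ 2 * QQ φ u + e * tt φ ((φ u + φ (φ u)) * x) := by
  simp only [QQ, tt, map_mul, map_add, he, h3]; ring

lemma QQ_inv (φ : F →+* F) (h3 : ∀ x, φ (φ (φ x)) = x) (u : F) :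
    QQ φ u⁻¹ = 0 ↔ tt φ u = 0 := by
  by_cases hu : u = 0
  · subst hu; simp [QQ, tt]
  have h1 : φ u ≠ 0 := by simpa using hu
  have h2 : φ (φ u) ≠ 0 := by simpa using hu
  have : QQ φ u⁻¹ * (u * φ u * φ (φ u)) = tt φ u := by
    simp only [QQ, tt, map_mul, map_inv₀, h3]; field_simp; ring
  rw [← this]
  simp [hu]

lemma cross (φ : F →+* F) (h3 : ∀ x, φ (φ (φ x)) = x) (c d x : F)
    (hcd : c * φ d ≠ d * φ c) (hc : tt φ (c * x) = 0) (hd : tt φ (d * x) = 0) :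
    ∃ e, φ e = e ∧ x = e * (φ c * φ (φ d) - φ (φ c) * φ d) := by
  have hx0 : φ c * φ (φ d) - φ (φ c) * φ d ≠ 0 := by
    intro h
    apply hcd
    apply φ.injective
    simp only [map_mul]
    linear_combination h
  refine ⟨x / (φ c * φ (φ d) - φ (φ c) * φ d), ?_, by field_simp⟩
  have hx1 : φ (φ c * φ (φ d) - φ (φ c) * φ d) ≠ 0 := by
    rwa [Ne, map_eq_zero]
  rw [map_div₀, div_eq_div_iff hx1 hx0]
  simp only [tt, map_mul, map_sub, h3] at *
  linear_combination (φ (φ d)) * hc - (φ (φ c)) * hd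

lemma cross_mem (φ : F →+* F) (h3 : ∀ x, φ (φ (φ x)) = x) (c d : F) :
    tt φ (c * (φ c * φ (φ d) - φ (φ c) * φ d)) = 0 ∧
    tt φ (d * (φ c * φ (φ d) - φ (φ c) * φ d)) = 0 := by
  constructor <;> (simp only [tt, map_mul, map_sub, h3]; ring)

variable [Fintype F]

lemma card_E (φ : F →+* F) (h3 : ∀ x, φ (φ (φ x)) = x) (q : ℕ) (hq : 2 ≤ q)
    (hφ : ∀ x, φ x = x ^ q) (hF : Fintype.card F = q ^ 3) :
    #{x : F | φ x = x} = q ∧ #{x : F | tt φ x = 0} = q ^ 2 := by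
  have hE : #{x : F | φ x = x} ≤ q := by
    have hne : (Polynomial.X ^ q - Polynomial.X : Polynomial F) ≠ 0 :=
      FiniteField.X_pow_card_sub_X_ne_zero F (by omega)
    have := Polynomial.card_roots' (Polynomial.X ^ q - Polynomial.X : Polynomial F)
    rw [FiniteField.X_pow_card_sub_X_natDegree_eq F (by omega)] at this
    refine le_trans ?_ this
    refine le_trans (Finset.card_le_card ?_) (Multiset.toFinset_card_le _)
    intro x hx
    simp only [mem_filter, mem_univ, true_and] at hx
    simp [hne, ← hφ, hx]
  have hT : #{x : F | tt φ x = 0} ≤ q ^ 2 := by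
    have hlt : q < q ^ 2 := by nlinarith
    have hdeg : (Polynomial.X ^ (q^2) + (Polynomial.X ^ q + Polynomial.X) : Polynomial F).natDegree = q ^ 2 := by
      rw [Polynomial.natDegree_add_eq_left_of_natDegree_lt] <;> rw [Polynomial.natDegree_X_pow]
      rw [Polynomial.natDegree_add_eq_left_of_natDegree_lt] <;>
        simp [Polynomial.natDegree_X] <;> omega
    have hne : (Polynomial.X ^ (q^2) + (Polynomial.X ^ q + Polynomial.X) : Polynomial F) ≠ 0 := by
      intro h; rw [h] at hdeg; simp at hdeg; omega
    have := Polynomial.card_roots' (Polynomial.X ^ (q^2) + (Polynomial.X ^ q + Polynomial.X) : Polynomial F)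
    rw [hdeg] at this
    refine le_trans ?_ this
    refine le_trans (Finset.card_le_card ?_) (Multiset.toFinset_card_le _)
    intro x hx
    simp only [mem_filter, mem_univ, true_and, tt, hφ, ← pow_mul] at hx
    simp only [Multiset.mem_toFinset, Polynomial.mem_roots hne, Polynomial.IsRoot.def,
      Polynomial.eval_add, Polynomial.eval_pow, Polynomial.eval_X]
    rw [← hx]; ring
  let T : F →+ F := AddMonoidHom.mk' (tt φ) (tt_add φ)
  have h1 : Nat.card T.ker * T.ker.index = Nat.card F := AddSubgroup.card_mul_index _
  rw [AddSubgroup.index_ker] at h1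
  have hk : Nat.card T.ker = #{x : F | tt φ x = 0} := by
    have : #{x : F | tt φ x = 0} = Nat.card {x : F | tt φ x = 0} := by
      rw [Nat.card_eq_card_toFinset]; simp
    rw [this]
    rfl
  have hr : Nat.card T.range ≤ #{x : F | φ x = x} := by
    have : #{x : F | φ x = x} = Nat.card {x : F | φ x = x} := by
      rw [Nat.card_eq_card_toFinset]; simp
    rw [this]
    apply Nat.card_mono (Set.toFinite _)
    rintro _ ⟨y, rfl⟩
    exact tt_fix φ h3 y
  rw [Nat.card_eq_fintype_card (α := F), hF, hk] at h1
  constructor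
  · by_contra h
    have : #{x : F | φ x = x} < q := by omega
    have : #{x : F | tt φ x = 0} * Nat.card T.range < q ^ 2 * q :=
      lt_of_le_of_lt (Nat.mul_le_mul_right _ hT) (Nat.mul_lt_mul_of_pos_left (by omega) (by positivity))
    rw [h1] at this; ring_nf at this; omega
  · by_contra h
    have : #{x : F | tt φ x = 0} < q ^ 2 := by omega
    have : #{x : F | tt φ x = 0} * Nat.card T.range < q ^ 2 * q :=
      lt_of_le_of_lt (Nat.mul_le_mul_left _ (hr.trans hE)) (Nat.mul_lt_mul_of_pos_right (by omega) (by positivity))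
    rw [h1] at this; ring_nf at this; omega

lemma card_V (φ : F →+* F) (q : ℕ) (hT : #{x : F | tt φ x = 0} = q ^ 2) (c : F) (hc : c ≠ 0) :
    #{x : F | tt φ (c * x) = 0} = q ^ 2 := by
  rw [← hT]
  apply Finset.card_nbij' (fun x => c * x) (fun x => c⁻¹ * x)
  · intro x hx; simpa using hx
  · intro x hx; simpa [hc] using hx
  · intro x hx; simp [hc]
  · intro x hx; simp [hc]

lemma card_Q (φ : F →+* F) (h3 : ∀ x, φ (φ (φ x)) = x) (q : ℕ)
    (hT : #{x : F | tt φ x = 0} = q ^ 2) :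
    #{x : F | QQ φ x = 0} = q ^ 2 := by
  rw [← hT]
  apply Finset.card_nbij' (fun x => x⁻¹) (fun x => x⁻¹)
  · intro x hx; simpa [← QQ_inv φ h3] using hx
  · intro x hx; simpa [QQ_inv φ h3] using hx
  · intro x hx; simp
  · intro x hx; simp

lemma card_line (φ : F →+* F) (q : ℕ) (hE : #{x : F | φ x = x} = q) (u : F) (hu : u ≠ 0) :
    #{x : F | x * φ u = u * φ x} = q := by
  rw [← hE]
  have h1 : φ u ≠ 0 := by simpa using hu
  symm
  apply Finset.card_nbij' (fun x => x * u) (fun x => x / u)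
  · intro x hx; simp at hx; simp [hx]; ring
  · intro x hx; simp at hx; simp; field_simp; linear_combination -hx
  · intro x hx; simp [hu]
  · intro x hx; simp [hu]

lemma card_W (φ : F →+* F) (h3 : ∀ x, φ (φ (φ x)) = x) (q : ℕ) (hE : #{x : F | φ x = x} = q)
    (c d : F) (hcd : c * φ d ≠ d * φ c) :
    #{x : F | tt φ (c * x) = 0 ∧ tt φ (d * x) = 0} = q := by
  have hx0 : φ c * φ (φ d) - φ (φ c) * φ d ≠ 0 := by
    intro h
    apply hcd
    apply φ.injective
    simp only [map_mul]
    linear_combination h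
  rw [← hE]
  symm
  apply Finset.card_nbij (fun x => x * (φ c * φ (φ d) - φ (φ c) * φ d))
  · intro e he
    simp only [coe_filter, mem_univ, true_and, Set.mem_ofPred_eq] at he ⊢
    obtain ⟨h1, h2⟩ := cross_mem φ h3 c d
    rw [mul_left_comm, mul_left_comm d, tt_smul φ e _ he, tt_smul φ e _ he, h1, h2]; simp
  · intro e _ e' _ h
    exact mul_right_cancel₀ hx0 h
  · intro x hx
    simp only [coe_filter, mem_univ, true_and, Set.mem_ofPred_eq] at hx
    obtain ⟨e, he, rfl⟩ := cross φ h3 c d x hcd hx.1 hx.2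
    exact ⟨e, by simpa using he, rfl⟩

lemma card_W' (φ : F →+* F) (q : ℕ) (hT : #{x : F | tt φ x = 0} = q ^ 2)
    (c d : F) (hc : c ≠ 0) (hcd : c * φ d = d * φ c) :
    #{x : F | tt φ (c * x) = 0 ∧ tt φ (d * x) = 0} = q ^ 2 := by
  rw [← card_V φ q hT c hc]
  congr 1
  ext x
  simp only [mem_filter, mem_univ, true_and, and_iff_left_iff_imp]
  intro h
  have h1 : φ c ≠ 0 := by simpa using hc
  have : d * x = (d / c) * (c * x) := by field_simp
  rw [this, tt_smul, h, mul_zero]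
  rw [map_div₀]; field_simp; linear_combination hcd

lemma N_tangent [CharP F 2] (φ : F →+* F) (h3 : ∀ x, φ (φ (φ x)) = x) (q : ℕ) (hq : 2 ≤ q)
    (hE : #{x : F | φ x = x} = q) (hT : #{x : F | tt φ x = 0} = q ^ 2)
    (c : F) (hc : c ≠ 0) (h : tt φ c = 0) :
    #{u : F | QQ φ u = 0 ∧ tt φ (c * u) = 0} = q := by
  have h2 : (2 : F) = 0 := CharTwo.two_eq_zero
  have hs : ∀ y : F, ∃ e, e ^ 2 = y := fun y => by
    obtain ⟨e, he⟩ := (frobeniusEquiv F 2).surjective y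
    exact ⟨e, he⟩
  have hinj : ∀ a b : F, a ^ 2 = b ^ 2 → a = b := fun a b hab => (frobeniusEquiv F 2).injective hab
  choose r hr using hs
  have hrE : ∀ y, φ y = y → φ (r y) = r y := fun y hy => by
    apply hinj; rw [← map_pow, hr, hy]
  have hQ1 : ∀ e x : F, φ e = e → QQ φ (x + e) = QQ φ x + e ^ 2 := fun e x he => by
    have := QQ_add φ h3 e x 1 he
    rw [mul_one] at this
    rw [this]
    simp only [QQ, tt, map_one, map_mul, map_add]
    linear_combination (e ^ 2 + e * (x + φ x + φ (φ x))) * h2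
  have key : #({u : F | QQ φ u = 0 ∧ tt φ (c * u) = 0} : Finset F) * #({x : F | φ x = x} : Finset F)
      = #{x : F | tt φ (c * x) = 0} := by
    rw [← Finset.card_product]
    apply Finset.card_nbij' (fun p => p.1 + p.2) (fun x => (x + r (QQ φ x), r (QQ φ x)))
    · rintro ⟨z, e⟩ hp
      simp only [coe_product, coe_filter, mem_univ, true_and, Set.mem_prod, Set.mem_ofPred_eq] at hp ⊢
      rw [mul_add, tt_add, hp.1.2, mul_comm, tt_smul φ _ _ hp.2, h]; simp
    · intro x hx
      simp only [coe_product, coe_filter, mem_univ, true_and, Set.mem_prod, Set.mem_ofPred_eq] at hx ⊢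
      have he := hrE (QQ φ x) (tt_fix φ h3 _)
      refine ⟨⟨?_, ?_⟩, he⟩
      · rw [hQ1 _ _ he, hr]; linear_combination (QQ φ x) * h2
      · rw [mul_add, tt_add, hx, mul_comm, tt_smul φ _ _ he, h]; simp
    · rintro ⟨z, e⟩ hp
      simp only [coe_product, coe_filter, mem_univ, true_and, Set.mem_prod, Set.mem_ofPred_eq] at hp ⊢
      have : r (QQ φ (z + e)) = e := by
        apply hinj; rw [hr, hQ1 _ _ hp.2, hp.1.1, zero_add]
      rw [this]
      ext
      · simp only; linear_combination e * h2
      · rfl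
    · intro x hx
      simp only
      linear_combination (r (QQ φ x)) * h2
  rw [hE, card_V φ q hT c hc, pow_two] at key
  exact Nat.eq_of_mul_eq_mul_right (by omega) key

lemma N_other [CharP F 2] (φ : F →+* F) (h3 : ∀ x, φ (φ (φ x)) = x) (q : ℕ) (hq : 2 ≤ q)
    (hE : #{x : F | φ x = x} = q) (hT : #{x : F | tt φ x = 0} = q ^ 2)
    (c : F) (hc : c ≠ 0) (h : tt φ c ≠ 0) :
    #{u : F | QQ φ u = 0 ∧ tt φ (c * u) = 0} = 1 ∨
    #{u : F | QQ φ u = 0 ∧ tt φ (c * u) = 0} = 2 * q - 1 := by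
  have h2 : (2 : F) = 0 := CharTwo.two_eq_zero
  by_cases hu : ∃ u, u ≠ 0 ∧ QQ φ u = 0 ∧ tt φ (c * u) = 0
  swap
  · left
    rw [Finset.card_eq_one]
    refine ⟨0, ?_⟩
    ext x
    simp only [mem_filter, mem_univ, true_and, mem_singleton]
    constructor
    · intro hx; by_contra h0; exact hu ⟨x, h0, hx⟩
    · rintro rfl; simp [QQ, tt]
  right
  obtain ⟨u, hu0, hQu, hcu⟩ := hu
  set d := φ u + φ (φ u) with hd
  have hφu : φ u ≠ 0 := by simpa using hu0
  have hφc : φ c ≠ 0 := by simpa using hc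
  have hdu : tt φ (d * u) = 0 := by
    simp only [tt, hd, map_mul, map_add, h3]
    linear_combination (u * φ u + u * φ (φ u) + φ u * φ (φ u)) * h2
  have hcd : c * φ d ≠ d * φ c := by
    intro hcd
    have hl : φ (d / c) = d / c := by
      rw [map_div₀]; field_simp; linear_combination hcd
    have h4 : tt φ d = (d / c) * tt φ c := by
      rw [← tt_smul φ _ _ hl]; congr 1; field_simp
    have h5 : tt φ d = 0 := by
      simp only [tt, hd, map_add, h3]
      linear_combination (u + φ u + φ (φ u)) * h2
    have hd0 : d = 0 := by
      rw [h5] at h4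
      rcases mul_eq_zero.1 h4.symm with h6 | h6
      · simpa [hc] using h6
      · exact absurd h6 h
    have h6 : φ u = u := by
      apply φ.injective
      rw [hd] at hd0
      linear_combination hd0 - φ u * h2
    have : QQ φ u = u ^ 2 := by
      simp only [QQ, tt, map_mul, h6]
      linear_combination u ^ 2 * h2
    rw [hQu] at this
    exact hu0 (by simpa using this.symm)
  have hZ0 : #{x : F | (QQ φ x = 0 ∧ tt φ (c * x) = 0) ∧ tt φ (d * x) = 0} = q := by
    rw [← card_W φ h3 q hE c d hcd]
    congr 1
    ext x
    simp only [mem_filter, mem_univ, true_and]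
    constructor
    · rintro ⟨⟨_, a⟩, b⟩; exact ⟨a, b⟩
    · rintro ⟨a, b⟩
      refine ⟨⟨?_, a⟩, b⟩
      obtain ⟨e, he, hx⟩ := cross φ h3 c d x hcd a b
      obtain ⟨e', he', hu'⟩ := cross φ h3 c d u hcd hcu hdu
      have he0 : e' ≠ 0 := by rintro rfl; simp at hu'; exact hu0 hu'
      have : x = (e / e') * u := by rw [hx, hu']; field_simp
      rw [this, QQ_smul, hQu, mul_zero]
      rw [map_div₀, he, he']
  have hV1 : #{x : F | tt φ (c * x) = 0 ∧ ¬ tt φ (d * x) = 0} + q = q ^ 2 := by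
    rw [← card_V φ q hT c hc, ← Finset.card_filter_add_card_filter_not (s := {x : F | tt φ (c * x) = 0}) (fun x => tt φ (d * x) = 0), filter_filter, filter_filter, card_W φ h3 q hE c d hcd, add_comm]
  have hA : ∀ e x, φ e = e → QQ φ (x + e * u) = QQ φ x + e * tt φ (d * x) := fun e x he => by
    rw [QQ_add φ h3 e x u he, hQu]; ring
  have hB : ∀ e x, φ e = e → tt φ (d * (x + e * u)) = tt φ (d * x) := fun e x he => by
    rw [mul_add, tt_add, mul_left_comm, tt_smul φ _ _ he, hdu]; simp
  have hC : ∀ e x, φ e = e → tt φ (c * (x + e * u)) = tt φ (c * x) := fun e x he => by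
    rw [mul_add, tt_add, mul_left_comm, tt_smul φ _ _ he, hcu]; simp
  have key : #{x : F | (QQ φ x = 0 ∧ tt φ (c * x) = 0) ∧ ¬ tt φ (d * x) = 0} * #({x : F | φ x = x} : Finset F)
      = #{x : F | tt φ (c * x) = 0 ∧ ¬ tt φ (d * x) = 0} := by
    rw [← Finset.card_product]
    apply Finset.card_nbij' (fun p => p.1 + p.2 * u)
      (fun x => (x + (QQ φ x / tt φ (d * x)) * u, QQ φ x / tt φ (d * x)))
    · rintro ⟨z, e⟩ hp
      simp only [coe_product, coe_filter, mem_univ, true_and, Set.mem_prod, Set.mem_ofPred_eq] at hp ⊢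
      rw [hB _ _ hp.2, hC _ _ hp.2]; exact ⟨hp.1.1.2, hp.1.2⟩
    · intro x hx
      simp only [coe_product, coe_filter, mem_univ, true_and, Set.mem_prod, Set.mem_ofPred_eq] at hx ⊢
      have he : φ (QQ φ x / tt φ (d * x)) = QQ φ x / tt φ (d * x) := by
        rw [map_div₀, tt_fix φ h3, QQ, tt_fix φ h3]
      rw [hA _ _ he, hB _ _ he, hC _ _ he]
      refine ⟨⟨⟨?_, hx.1⟩, hx.2⟩, he⟩
      rw [div_mul_cancel₀ _ hx.2]
      linear_combination (QQ φ x) * h2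
    · rintro ⟨z, e⟩ hp
      simp only [coe_product, coe_filter, mem_univ, true_and, Set.mem_prod, Set.mem_ofPred_eq] at hp ⊢
      rw [hA _ _ hp.2, hB _ _ hp.2, hp.1.1.1, zero_add, mul_div_cancel_right₀ _ hp.1.2]
      ext
      · simp only; linear_combination (e * u) * h2
      · rfl
    · intro x hx
      simp only
      linear_combination (QQ φ x / tt φ (d * x) * u) * h2
  rw [← Finset.card_filter_add_card_filter_not (s := {u : F | QQ φ u = 0 ∧ tt φ (c * u) = 0}) (fun x => tt φ (d * x) = 0), filter_filter, filter_filter, hZ0]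
  rw [hE] at key
  rw [← key] at hV1
  have : #{x : F | (QQ φ x = 0 ∧ tt φ (c * x) = 0) ∧ ¬ tt φ (d * x) = 0} + 1 = q := by
    apply Nat.eq_of_mul_eq_mul_right (show 0 < q by omega)
    rw [← pow_two, ← hV1]; ring
  omega


def NN (φ : F →+* F) (c : F) : ℕ := #{u : F | QQ φ u = 0 ∧ tt φ (c * u) = 0}

lemma NN_smul (φ : F →+* F) (e c : F) (he : φ e = e) (he0 : e ≠ 0) : NN φ (e * c) = NN φ c := by
  unfold NN
  congr 1
  ext u
  simp only [mem_filter, mem_univ, true_and]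
  rw [mul_assoc, tt_smul φ _ _ he]
  simp [he0]

lemma counts [CharP F 2] (φ : F →+* F) (h3 : ∀ x, φ (φ (φ x)) = x) (q : ℕ) (hq : 2 ≤ q)
    (hE : #{x : F | φ x = x} = q) (hT : #{x : F | tt φ x = 0} = q ^ 2) (x : F) (hx : x ≠ 0) :
    (2 * (#{c : F | c ≠ 0 ∧ (tt φ (c * x) = 0 ∧ NN φ c = 2 * q - 1)} : ℤ) = ((q : ℤ) - 1) * q *
      ((if QQ φ x = 0 then 1 else 0) + 1 - (if φ x = x then 1 else 0))) ∧
    (2 * (#{c : F | c ≠ 0 ∧ (tt φ (c * x) = 0 ∧ NN φ c = 1)} : ℤ) = ((q : ℤ) - 1) * q *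
      (- (if QQ φ x = 0 then 1 else 0) + 1 - (if φ x = x then 1 else 0))) := by
  have h2 : (2 : F) = 0 := CharTwo.two_eq_zero
  have hφx : φ x ≠ 0 := by simpa using hx
  have hcl : ∀ c, c ≠ 0 → (tt φ c = 0 ∧ NN φ c = q) ∨ (tt φ c ≠ 0 ∧ NN φ c = 1) ∨
      (tt φ c ≠ 0 ∧ NN φ c = 2 * q - 1) := by
    intro c hc
    by_cases h : tt φ c = 0
    · exact Or.inl ⟨h, N_tangent φ h3 q hq hE hT c hc h⟩
    · rcases N_other φ h3 q hq hE hT c hc h with h' | h'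
      · exact Or.inr (Or.inl ⟨h, h'⟩)
      · exact Or.inr (Or.inr ⟨h, h'⟩)
  set A0 := #{c : F | c ≠ 0 ∧ (tt φ (c * x) = 0 ∧ NN φ c = 1)} with hA0
  set A1 := #{c : F | c ≠ 0 ∧ (tt φ (c * x) = 0 ∧ NN φ c = q)} with hA1
  set A2 := #{c : F | c ≠ 0 ∧ (tt φ (c * x) = 0 ∧ NN φ c = 2 * q - 1)} with hA2
  set C : Finset F := {c : F | c ≠ 0 ∧ tt φ (c * x) = 0} with hC
  have hCi : insert 0 C = ({c : F | tt φ (c * x) = 0} : Finset F) := by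
    ext c
    by_cases hc : c = 0
    · subst hc; simp [hC, tt]
    · simp [hC, hc]
  have h0C : (0 : F) ∉ C := by simp [hC]
  have hCcard : #C + 1 = q ^ 2 := by
    rw [← Finset.card_insert_of_notMem h0C, hCi, ← card_V φ q hT x hx]
    congr 1; ext c; simp [mul_comm]
  have hsum : ∑ c ∈ C, NN φ c = A0 + q * A1 + (2 * q - 1) * A2 := by
    have e0 : A0 = ∑ c ∈ C, if NN φ c = 1 then 1 else 0 := by
      rw [← Finset.card_filter, hC, filter_filter, hA0]; congr 1; ext c; simp [and_assoc]
    have e1 : A1 = ∑ c ∈ C, if NN φ c = q then 1 else 0 := by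
      rw [← Finset.card_filter, hC, filter_filter, hA1]; congr 1; ext c; simp [and_assoc]
    have e2 : A2 = ∑ c ∈ C, if NN φ c = 2 * q - 1 then 1 else 0 := by
      rw [← Finset.card_filter, hC, filter_filter, hA2]; congr 1; ext c; simp [and_assoc]
    rw [e0, e1, e2, mul_sum, mul_sum, ← sum_add_distrib, ← sum_add_distrib]
    apply sum_congr rfl
    intro c hc
    have hc0 : c ≠ 0 := by simp [hC] at hc; exact hc.1
    rcases hcl c hc0 with h | h | h <;> rw [h.2]
    · rw [if_neg (by omega), if_pos rfl, if_neg (by omega)]; ring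
    · rw [if_pos rfl, if_neg (by omega), if_neg (by omega)]; ring
    · rw [if_neg (by omega), if_neg (by omega), if_pos rfl]; ring
  have hcnt : #C = A0 + A1 + A2 := by
    have e0 : A0 = ∑ c ∈ C, if NN φ c = 1 then 1 else 0 := by
      rw [← Finset.card_filter, hC, filter_filter, hA0]; congr 1; ext c; simp [and_assoc]
    have e1 : A1 = ∑ c ∈ C, if NN φ c = q then 1 else 0 := by
      rw [← Finset.card_filter, hC, filter_filter, hA1]; congr 1; ext c; simp [and_assoc]
    have e2 : A2 = ∑ c ∈ C, if NN φ c = 2 * q - 1 then 1 else 0 := by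
      rw [← Finset.card_filter, hC, filter_filter, hA2]; congr 1; ext c; simp [and_assoc]
    rw [e0, e1, e2, ← sum_add_distrib, ← sum_add_distrib, card_eq_sum_ones]
    apply sum_congr rfl
    intro c hc
    have hc0 : c ≠ 0 := by simp [hC] at hc; exact hc.1
    rcases hcl c hc0 with h | h | h <;> rw [h.2]
    · rw [if_neg (by omega), if_pos rfl, if_neg (by omega)]
    · rw [if_pos rfl, if_neg (by omega), if_neg (by omega)]
    · rw [if_neg (by omega), if_neg (by omega), if_pos rfl]
  have hNN0 : NN φ 0 = q ^ 2 := by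
    rw [← card_Q φ h3 q hT]; unfold NN; congr 1; ext u; simp [tt]
  set P := #{u : F | QQ φ u = 0 ∧ u * φ x = x * φ u} with hP
  have hdc : q ^ 2 + ∑ c ∈ C, NN φ c = q ^ 2 * P + q * (q ^ 2 - P) := by
    rw [← hNN0, ← sum_insert h0C, hCi, hNN0]
    have e1 : ∀ c, NN φ c = #(({u : F | QQ φ u = 0} : Finset F).bipartiteAbove (fun c u => tt φ (c * u) = 0) c) := by
      intro c; unfold NN bipartiteAbove; rw [filter_filter]
    simp_rw [e1]
    rw [sum_card_bipartiteAbove_eq_sum_card_bipartiteBelow]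
    have e2 : ∀ u, #(({c : F | tt φ (c * x) = 0} : Finset F).bipartiteBelow (fun c u => tt φ (c * u) = 0) u)
        = if u * φ x = x * φ u then q ^ 2 else q := by
      intro u
      unfold bipartiteBelow
      rw [filter_filter]
      trans #{c : F | tt φ (x * c) = 0 ∧ tt φ (u * c) = 0}
      · congr 1; ext c; simp [mul_comm]
      split_ifs with h
      · exact card_W' φ q hT x u hx h.symm
      · exact card_W φ h3 q hE x u (fun h' => h h'.symm)
    simp_rw [e2]
    rw [sum_ite, sum_const, sum_const, filter_filter, filter_filter]
    have e3 := Finset.card_filter_add_card_filter_not (s := {u : F | QQ φ u = 0}) (fun u => u * φ x = x * φ u)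
    rw [filter_filter, filter_filter, card_Q φ h3 q hT] at e3
    rw [← hP] at e3 ⊢
    have e4 : q ^ 2 - P = #{u : F | QQ φ u = 0 ∧ ¬ u * φ x = x * φ u} := by omega
    rw [e4]; simp only [smul_eq_mul]; ring
  have hPv : P = if QQ φ x = 0 then q else 1 := by
    have hlam : ∀ u, u * φ x = x * φ u → ∃ e, φ e = e ∧ u = e * x := by
      intro u hu
      refine ⟨u / x, ?_, by field_simp⟩
      rw [map_div₀]; field_simp; linear_combination -hu
    split_ifs with h
    · rw [← card_line φ q hE x hx, hP]
      congr 1; ext u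
      simp only [mem_filter, mem_univ, true_and, and_iff_right_iff_imp]
      intro hu
      obtain ⟨e, he, rfl⟩ := hlam u hu
      rw [QQ_smul φ _ _ he, h, mul_zero]
    · rw [hP, card_eq_one]
      refine ⟨0, ?_⟩
      ext u
      simp only [mem_filter, mem_univ, true_and, mem_singleton]
      constructor
      · rintro ⟨a, b⟩
        obtain ⟨e, he, rfl⟩ := hlam u b
        rw [QQ_smul φ _ _ he] at a
        simp [h] at a
        simp [a]
      · rintro rfl; simp [QQ, tt]
  have hA1v : A1 + 1 = if φ x = x then q ^ 2 else q := by
    have e1 : ({c : F | c ≠ 0 ∧ (tt φ (c * x) = 0 ∧ NN φ c = q)} : Finset F)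
       = ({c : F | tt φ (x * c) = 0 ∧ tt φ (1 * c) = 0} : Finset F).erase 0 := by
      ext c
      simp only [mem_filter, mem_univ, true_and, mem_erase, one_mul, mul_comm x]
      apply and_congr_right
      intro hc
      apply and_congr_right
      intro _
      rcases hcl c hc with h | h | h
      · simp [h]
      · simp only [h.1, h.2, iff_false]; omega
      · simp only [h.1, h.2, iff_false]; omega
    rw [hA1, e1, card_erase_add_one (by simp [tt])]
    split_ifs with h
    · exact card_W' φ q hT x 1 hx (by simp [h])
    · exact card_W φ h3 q hE x 1 (by simpa using fun h' : x = φ x => h h'.symm)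
  have hnot : ¬ (QQ φ x = 0 ∧ φ x = x) := by
    rintro ⟨h, h'⟩
    have : QQ φ x = x ^ 2 := by
      simp only [QQ, tt, map_mul, h']
      linear_combination x ^ 2 * h2
    rw [h] at this
    exact hx (by simpa using this.symm)
  have hPle : P ≤ q ^ 2 := by
    rw [hPv]; split_ifs <;> nlinarith
  rw [hsum] at hdc
  have z1 : (q : ℤ) ^ 2 + (A0 + q * A1 + (2 * q - 1) * A2) = q ^ 2 * P + q * (q ^ 2 - P) := by
    zify [hPle, show 1 ≤ 2 * q by omega] at hdc
    exact hdc
  have z2 : (A0 : ℤ) + A1 + A2 + 1 = q ^ 2 := by exact_mod_cast hcnt ▸ hCcard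
  have hq1 : (q : ℤ) - 1 ≠ 0 := by
    have : (2 : ℤ) ≤ q := by exact_mod_cast hq
    omega
  have z3 : (A1 : ℤ) + 2 * A2 = q * P + q ^ 2 - q - 1 := by
    apply mul_left_cancel₀ hq1
    linear_combination z1 - z2
  have z4 : (A1 : ℤ) + 1 = if φ x = x then (q : ℤ) ^ 2 else q := by
    have := congrArg (Nat.cast (R := ℤ)) hA1v
    push_cast at this; exact this
  have z5 : (P : ℤ) = if QQ φ x = 0 then (q : ℤ) else 1 := by
    have := congrArg (Nat.cast (R := ℤ)) hPv
    push_cast at this; exact this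
  by_cases c1 : QQ φ x = 0 <;> by_cases c2 : φ x = x
  · exact absurd ⟨c1, c2⟩ hnot
  all_goals
    simp only [c1, c2, if_true, if_false] at z4 z5 ⊢
    rw [z5] at z3
    constructor
    · linear_combination z3 - z4
    · linear_combination 2 * z2 - z3 - z4

lemma transfer (s : ℕ) (φ : F →+* F) (q : ℕ)
    (hE : #{x : F | φ x = x} = q)
    (ω : F) (hω : ∀ x : F, x ≠ 0 → ∃ n : ℕ, x = ω ^ n) (hω0 : ω ≠ 0)
    (hM : ∀ n : ℕ, φ (ω ^ n) = ω ^ n ↔ Mof s ∣ n)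
    (P : F → Prop) (hP : ∀ e c, φ e = e → e ≠ 0 → (P (e * c) ↔ P c)) :
    #{j : ZMod (Mof s) | P (ω ^ j.val)} * (q - 1) = #{c : F | c ≠ 0 ∧ P c} := by
  have hE' : #{x : F | φ x = x ∧ x ≠ 0} = q - 1 := by
    rw [← hE, ← Finset.card_erase_of_mem (a := (0 : F)) (by simp)]
    congr 1; ext x; simp [and_comm]
  rw [← hE', ← card_product]
  apply card_nbij (fun p => p.2 * ω ^ p.1.val)
  · rintro ⟨j, e⟩ hp
    simp only [coe_product, coe_filter, mem_univ, true_and, Set.mem_prod, Set.mem_ofPred_eq] at hp ⊢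
    exact ⟨by simp [hp, hω0], (hP _ _ hp.2.1 hp.2.2).2 hp.1⟩
  · rintro ⟨j, e⟩ hp ⟨j', e'⟩ hp' h
    simp only [coe_product, coe_filter, mem_univ, true_and, Set.mem_prod, Set.mem_ofPred_eq] at hp hp' h
    have key : ∀ (j j' : ZMod (Mof s)) (e e' : F), φ e = e → φ e' = e' → e ≠ 0 → e' ≠ 0 →
        j.val ≤ j'.val → e * ω ^ j.val = e' * ω ^ j'.val → j = j' := by
      intro j j' e e' he he' h0 h0' hle h
      obtain ⟨k, hk⟩ := Nat.exists_eq_add_of_le hle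
      have hk' : ω ^ k = e / e' := by
        rw [hk, pow_add] at h
        have : ω ^ j.val ≠ 0 := pow_ne_zero _ hω0
        field_simp
        apply mul_left_cancel₀ this
        linear_combination -h
      have : φ (ω ^ k) = ω ^ k := by rw [hk', map_div₀, he, he']
      rw [hM] at this
      have h1 := ZMod.val_lt j'
      have h2 : k = 0 := Nat.eq_zero_of_dvd_of_lt this (by omega)
      apply ZMod.val_injective
      omega
    have hj : j = j' := by
      rcases le_total j.val j'.val with hle | hle
      · exact key j j' e e' hp.2.1 hp'.2.1 hp.2.2 hp'.2.2 hle h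
      · exact (key j' j e' e hp'.2.1 hp.2.1 hp'.2.2 hp.2.2 hle h.symm).symm
    subst hj
    have := mul_right_cancel₀ (pow_ne_zero _ hω0) h
    rw [this]
  · intro c hc
    simp only [coe_product, coe_filter, mem_univ, true_and, Set.mem_ofPred_eq] at hc
    obtain ⟨n, rfl⟩ := hω c hc.1
    have hfix : φ (ω ^ (Mof s * (n / Mof s))) = ω ^ (Mof s * (n / Mof s)) := (hM _).2 ⟨_, rfl⟩
    have heq : ω ^ n = ω ^ (Mof s * (n / Mof s)) * ω ^ ((n : ZMod (Mof s)).val) := by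
      rw [ZMod.val_natCast, ← pow_add, Nat.div_add_mod]
    refine ⟨((n : ZMod (Mof s)), ω ^ (Mof s * (n / Mof s))), ?_, heq.symm⟩
    simp only [coe_product, coe_filter, mem_univ, true_and, Set.mem_prod, Set.mem_ofPred_eq]
    refine ⟨?_, hfix, pow_ne_zero _ hω0⟩
    rw [heq] at hc
    exact (hP _ _ hfix (pow_ne_zero _ hω0)).1 hc.2

lemma Ind_eq (P : Prop) : Ind P = if P then 1 else 0 := by
  unfold Ind; congr

lemma mainaux (s : ℕ) (hs : 1 ≤ s)
    (hF : Fintype.card F = 2 ^ (3 * s)) (ω : F)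
    (hω : ∀ x : F, x ≠ 0 → ∃ n : ℕ, x = ω ^ n) :
    ∀ a : ZMod (Mof s),
      (({p : ZMod (Mof s) × ZMod (Mof s) | p.1 ∈ T1 s ω ∧ p.2 ∈ T2 s ω ∧ p.1 - p.2 = a}.ncard : ℤ) =
        2 ^ (s - 1) * Ind (-a ∈ T1 s ω) + 2 ^ (s - 1) - 2 ^ (s - 1) * Ind (a = 0)) ∧
      (({p : ZMod (Mof s) × ZMod (Mof s) | p.1 ∈ T1 s ω ∧ p.2 ∈ T3 s ω ∧ p.1 - p.2 = a}.ncard : ℤ) =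
        -(2 ^ (s - 1)) * Ind (-a ∈ T1 s ω) + 2 ^ (s - 1) - 2 ^ (s - 1) * Ind (a = 0)) := by
  intro a
  have : Fact (Nat.Prime 2) := ⟨Nat.prime_two⟩
  have : CharP F 2 := charP_of_card_eq_prime_pow hF
  obtain ⟨q, hqs⟩ : ∃ q, q = 2 ^ s := ⟨_, rfl⟩
  have hq : 2 ≤ q := by
    rw [hqs]; calc 2 = 2 ^ 1 := rfl
      _ ≤ 2 ^ s := Nat.pow_le_pow_right (by norm_num) hs
  have hF3 : Fintype.card F = q ^ 3 := by rw [hF, hqs, ← pow_mul, mul_comm]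
  obtain ⟨φ, hφ⟩ : ∃ φ : F →+* F, ∀ x, φ x = x ^ q :=
    ⟨iterateFrobenius F 2 s, fun x => by rw [iterateFrobenius_def, hqs]⟩
  have h3 : ∀ x, φ (φ (φ x)) = x := by
    intro x
    simp only [hφ, ← pow_mul]
    have := FiniteField.pow_card x
    rw [hF3] at this
    rw [← pow_two, ← pow_succ, this]
  obtain ⟨hE, hT⟩ := card_E φ h3 q hq hφ hF3
  have hq8 : 8 ≤ q ^ 3 := by
    calc 8 = 2 ^ 3 := rfl
      _ ≤ q ^ 3 := Nat.pow_le_pow_left hq 3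
  have hω0 : ω ≠ 0 := by
    rintro rfl
    have hsub : (univ : Finset F) ⊆ {0, 1} := by
      intro x _
      by_cases hx : x = 0
      · simp [hx]
      · obtain ⟨n, rfl⟩ := hω x hx
        rcases Nat.eq_zero_or_pos n with rfl | hn
        · simp
        · simp [zero_pow hn.ne'] at hx
    have h1 := card_le_card hsub
    have h2 : #({0, 1} : Finset F) ≤ 2 := card_le_two
    rw [card_univ, hF3] at h1
    omega
  have hMq : Mof s * (q - 1) = q ^ 3 - 1 := by
    have : Mof s = q ^ 2 + q + 1 := by rw [hqs, Mof]; ring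
    rw [this]
    zify [show 1 ≤ q by omega, show 1 ≤ q ^ 3 by omega]
    ring
  have hord : orderOf ω = q ^ 3 - 1 := by
    let w : Fˣ := Units.mk0 ω hω0
    have h1 : orderOf ω = orderOf w := by
      rw [← orderOf_units]; rfl
    rw [h1, orderOf_eq_card_of_forall_mem_zpowers, Nat.card_units, Nat.card_eq_fintype_card, hF3]
    intro x
    obtain ⟨n, hn⟩ := hω x x.ne_zero
    refine ⟨n, ?_⟩
    ext
    simp [w, hn]
  have hM : ∀ n : ℕ, φ (ω ^ n) = ω ^ n ↔ Mof s ∣ n := by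
    intro n
    rw [hφ, ← pow_mul]
    have e : n * q = n + n * (q - 1) := by
      obtain ⟨k, rfl⟩ := Nat.exists_eq_add_of_le (show 1 ≤ q by omega)
      rw [Nat.add_sub_cancel_left]; ring
    rw [e, pow_add, mul_eq_left₀ (pow_ne_zero _ hω0), ← orderOf_dvd_iff_pow_eq_one, hord, ← hMq]
    exact Nat.mul_dvd_mul_iff_right (by omega)
  have htr : ∀ x : F, trFE s x = tt φ x := by
    intro x
    simp only [trFE, tt, hφ, hqs, ← pow_mul]
    congr 2; ring
  have hSa : ∀ j : ZMod (Mof s), (Sa s ω (j.val : ℤ)).ncard + 1 = NN φ (ω ^ j.val) := by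
    intro j
    have : Sa s ω (j.val : ℤ) = ((({u : F | QQ φ u = 0 ∧ tt φ (ω ^ j.val * u) = 0} : Finset F).erase 0 : Finset F) : Set F) := by
      ext u
      simp only [Sa, htr, Set.mem_ofPred_eq, coe_erase, coe_filter, mem_univ, true_and,
        Set.mem_sdiff, Set.mem_singleton_iff, zpow_natCast, QQ, hφ, ← hqs, pow_succ']
      tauto
    rw [this, Set.ncard_coe_finset, NN, card_erase_add_one]
    simp [QQ, tt]
  have hω1 : ∀ n : ℕ, ω ^ n ≠ 0 := fun n => pow_ne_zero _ hω0
  have hT1 : ∀ j, j ∈ T1 s ω ↔ tt φ (ω ^ j.val) = 0 := by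
    intro j
    have e : j ∈ T1 s ω ↔ NN φ (ω ^ j.val) = q := by
      rw [← hSa, T1, Set.mem_ofPred_eq, ← hqs]; omega
    rw [e]
    constructor
    · intro h
      by_contra h'
      rcases N_other φ h3 q hq hE hT _ (hω1 _) h' with h'' | h'' <;> unfold NN at h <;> omega
    · intro h; exact N_tangent φ h3 q hq hE hT _ (hω1 _) h
  have hT2 : ∀ j, j ∈ T2 s ω ↔ NN φ (ω ^ j.val) = 2 * q - 1 := by
    intro j
    rw [← hSa, T2, Set.mem_ofPred_eq, ← hqs]; omega
  have hT3 : ∀ j, j ∈ T3 s ω ↔ NN φ (ω ^ j.val) = 1 := by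
    intro j
    rw [← hSa, T3, Set.mem_ofPred_eq]; omega
  have hred : ∀ n : ℕ, ∃ e, φ e = e ∧ e ≠ 0 ∧ ω ^ n = e * ω ^ ((n : ZMod (Mof s)).val) := by
    intro n
    refine ⟨ω ^ (Mof s * (n / Mof s)), (hM _).2 ⟨_, rfl⟩, hω1 _, ?_⟩
    rw [ZMod.val_natCast, ← pow_add, Nat.div_add_mod]
  set x := ω ^ a.val with hx
  have hx0 : x ≠ 0 := hω1 _
  have hadd : ∀ j, j + a ∈ T1 s ω ↔ tt φ (ω ^ j.val * x) = 0 := by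
    intro j
    obtain ⟨e, he, he0, h⟩ := hred (j.val + a.val)
    push_cast at h
    rw [ZMod.natCast_zmod_val, ZMod.natCast_zmod_val, pow_add] at h
    rw [hT1, hx, h, tt_smul φ _ _ he]; simp [he0]
  have hneg : -a ∈ T1 s ω ↔ QQ φ x = 0 := by
    obtain ⟨e, he, he0, h⟩ := hred ((-a).val + a.val)
    push_cast at h
    rw [ZMod.natCast_zmod_val, ZMod.natCast_zmod_val, pow_add] at h
    simp only [neg_add_cancel, ZMod.val_zero, pow_zero, mul_one] at h
    have : ω ^ (-a).val = e * x⁻¹ := by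
      rw [← h, hx, mul_assoc, mul_inv_cancel₀ (hω1 _), mul_one]
    rw [hT1, this, tt_smul φ _ _ he, mul_eq_zero, ← QQ_inv φ h3, inv_inv]
    simp [he0]
  have hzero : a = 0 ↔ φ x = x := by
    rw [hx, hM]
    constructor
    · rintro rfl; simp
    · intro h
      have := Nat.eq_zero_of_dvd_of_lt h (ZMod.val_lt a)
      exact (ZMod.val_eq_zero a).1 this
  have hset : ∀ T : Set (ZMod (Mof s)), ∀ k, (∀ j, j ∈ T ↔ NN φ (ω ^ j.val) = k) →
      {p : ZMod (Mof s) × ZMod (Mof s) | p.1 ∈ T1 s ω ∧ p.2 ∈ T ∧ p.1 - p.2 = a}.ncard * (q - 1)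
      = #{c : F | c ≠ 0 ∧ (tt φ (c * x) = 0 ∧ NN φ c = k)} := by
    intro T k hk
    have tr := transfer s φ q hE ω hω hω0 hM (fun c => tt φ (c * x) = 0 ∧ NN φ c = k) ?_
    · refine Eq.trans ?_ (tr.trans (by congr!))
      congr 1
      have : {p : ZMod (Mof s) × ZMod (Mof s) | p.1 ∈ T1 s ω ∧ p.2 ∈ T ∧ p.1 - p.2 = a}
        = ((({j : ZMod (Mof s) | tt φ (ω ^ j.val * x) = 0 ∧ NN φ (ω ^ j.val) = k} : Finset _).image
            (fun j => (j + a, j)) : Finset _) : Set _) := by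
        ext ⟨i, j⟩
        simp only [Set.mem_ofPred_eq, coe_image, coe_filter, mem_univ, true_and, Set.mem_image,
          Prod.mk.injEq, ← hadd, ← hk]
        constructor
        · rintro ⟨h1, h2, h3⟩
          have : i = j + a := by rw [← h3]; ring
          exact ⟨j, ⟨this ▸ h1, h2⟩, this.symm, rfl⟩
        · rintro ⟨j', ⟨h1, h2⟩, rfl, rfl⟩
          exact ⟨h1, h2, by ring⟩
      rw [this, Set.ncard_coe_finset, card_image_of_injective]
      · congr!
      intro j j' h
      simpa using congrArg Prod.snd h
    · intro e c he he0
      rw [NN_smul φ e c he he0, mul_assoc, tt_smul φ _ _ he]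
      simp [he0]
  obtain ⟨r1, r2⟩ := counts φ h3 q hq hE hT x hx0
  rw [← hset _ _ hT2] at r1
  rw [← hset _ _ hT3] at r2
  have hq2 : (q : ℤ) = 2 * 2 ^ (s - 1) := by
    rw [hqs, ← pow_succ', Nat.sub_add_cancel hs]; simp
  have hq1 : (2 * ((q : ℤ) - 1)) ≠ 0 := by
    have : (2 : ℤ) ≤ q := by exact_mod_cast hq
    omega
  push_cast [Nat.cast_sub (show 1 ≤ q by omega)] at r1 r2
  rw [Ind_eq, Ind_eq]
  simp only [hneg, hzero]
  constructor
  · apply mul_left_cancel₀ hq1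
    linear_combination r1 + ((q : ℤ) - 1) * ((if QQ φ x = 0 then 1 else 0) + 1 - (if φ x = x then 1 else 0)) * hq2
  · apply mul_left_cancel₀ hq1
    linear_combination r2 + ((q : ℤ) - 1) * (- (if QQ φ x = 0 then 1 else 0) + 1 - (if φ x = x then 1 else 0)) * hq2

end aux

theorem statement10 (s : ℕ) (hs : 1 ≤ s) (F : Type*) [Field F] [Fintype F]
    (hF : Fintype.card F = 2 ^ (3 * s)) (ω : F)
    (hω : ∀ x : F, x ≠ 0 → ∃ n : ℕ, x = ω ^ n) :
    ∀ a : ZMod (Mof s),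
      (({p : ZMod (Mof s) × ZMod (Mof s) | p.1 ∈ T1 s ω ∧ p.2 ∈ T2 s ω ∧ p.1 - p.2 = a}.ncard : ℤ) =
        2 ^ (s - 1) * Ind (-a ∈ T1 s ω) + 2 ^ (s - 1) - 2 ^ (s - 1) * Ind (a = 0)) ∧
      (({p : ZMod (Mof s) × ZMod (Mof s) | p.1 ∈ T1 s ω ∧ p.2 ∈ T3 s ω ∧ p.1 - p.2 = a}.ncard : ℤ) =
        -(2 ^ (s - 1)) * Ind (-a ∈ T1 s ω) + 2 ^ (s - 1) - 2 ^ (s - 1) * Ind (a = 0)) := by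
  exact mainaux s hs hF ω hω
end
end

section
/- For every integer a, the Gauss period η'_a = ∑_{x ∈ C_a^{(M,G)}} ψ'(x) satisfies η'_a = −2^s·ψ(ω^a D) − 1; consequently η'_a = 2^s − 1 if a mod M ∈ T_1, η'_a = −2^{2s} + 2^s − 1 if a mod M ∈ T_2, and η'_a = 2^{2s} + 2^s − 1 if a mod M ∈ T_3. -/
noncomputable section

open scoped BigOperators

section helpers

set_option linter.unusedSectionVars false
set_option linter.style.haveILetI false

variable {F : Type*} [Field F] [Fintype F] [Algebra (ZMod 2) F]

lemma aux_charP : CharP F 2 :=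
  charP_of_injective_algebraMap (algebraMap (ZMod 2) F).injective 2

lemma psi_zero : psi F (0 : F) = 1 := by simp [psi]

lemma psi_add (x y : F) : psi F (x + y) = psi F x * psi F y := by
  unfold psi
  rw [map_add]
  generalize Algebra.trace (ZMod 2) F x = a
  generalize Algebra.trace (ZMod 2) F y = b
  revert a b
  decide

lemma aux_card_pow {n : ℕ} (hn : 0 < n) (b : F) [DecidableEq F] :
    (Finset.univ.filter (fun x : F => x ^ n = b)).card ≤ n := by
  classical
  have h : Finset.univ.filter (fun x : F => x ^ n = b) ⊆
      (Polynomial.nthRoots n b).toFinset := by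
    intro x hx
    simp only [Finset.mem_filter, Finset.mem_univ, true_and] at hx
    simp [Polynomial.mem_nthRoots hn, hx]
  exact (Finset.card_le_card h).trans
    ((Multiset.toFinset_card_le _).trans (Polynomial.card_nthRoots n b))

lemma aux_finrank {n : ℕ} (hF : Fintype.card F = 2 ^ n) : Module.finrank (ZMod 2) F = n := by
  have h := Module.card_eq_pow_finrank (K := ZMod 2) (V := F)
  rw [hF, ZMod.card] at h
  exact (Nat.pow_right_injective le_rfl h).symm

lemma trFE_pow (s : ℕ) (x : F) (hx : x ^ (2 ^ (3 * s)) = x) : (trFE s x) ^ (2 ^ s) = trFE s x := by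
  haveI := aux_charP (F := F)
  unfold trFE
  rw [add_pow_char_pow, add_pow_char_pow, ← pow_mul, ← pow_mul, ← pow_add, ← pow_add,
    show s + s = 2 * s by ring, show 2 * s + s = 3 * s by ring, hx]
  ring

lemma aux_pow2s (s : ℕ) (e : F) (he : e ^ (2 ^ s) = e) : e ^ (2 ^ (2 * s)) = e := by
  rw [two_mul, pow_add, pow_mul, he, he]

lemma trFE_smul (s : ℕ) (e x : F) (he : e ^ (2 ^ s) = e) : trFE s (e * x) = e * trFE s x := by
  unfold trFE
  rw [mul_pow, mul_pow, he, aux_pow2s s e he]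
  ring

lemma aux_trace (s : ℕ) (hF : Fintype.card F = 2 ^ (3 * s)) (y : F) :
    algebraMap (ZMod 2) F (Algebra.trace (ZMod 2) F y) =
      ∑ i ∈ Finset.range s, (trFE s y) ^ (2 ^ i) := by
  haveI := aux_charP (F := F)
  rw [FiniteField.algebraMap_trace_eq_sum_pow, aux_finrank hF, Nat.card_zmod,
    show 3 * s = s + s + s by ring, Finset.sum_range_add, Finset.sum_range_add,
    ← Finset.sum_add_distrib, ← Finset.sum_add_distrib]
  refine Finset.sum_congr rfl fun i _ => ?_
  unfold trFE
  rw [add_pow_char_pow, add_pow_char_pow, ← pow_mul, ← pow_mul, ← pow_add, ← pow_add, two_mul]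

open Classical in
lemma psi_eq_iff (s : ℕ) (hF : Fintype.card F = 2 ^ (3 * s)) (y : F) :
    psi F y = if ∑ i ∈ Finset.range s, (trFE s y) ^ (2 ^ i) = 0 then 1 else -1 := by
  unfold psi
  simp only [← aux_trace s hF, map_eq_zero_iff _ (algebraMap (ZMod 2) F).injective]

lemma psi_exists : ∃ y : F, psi F y = -1 := by
  haveI := aux_charP (F := F)
  obtain ⟨y, hy⟩ := Algebra.trace_surjective (ZMod 2) F 1
  exact ⟨y, by simp [psi, hy]⟩

lemma aux_shift (S : Finset F) (S_add : ∀ x ∈ S, ∀ y ∈ S, x + y ∈ S) (c e : F) (he : e ∈ S)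
    (h : psi F (e * c) = -1) : ∑ x ∈ S, psi F (x * c) = 0 := by
  haveI := aux_charP (F := F)
  have h1 : ∑ x ∈ S, psi F (x * c) = ∑ x ∈ S, psi F ((x + e) * c) := by
    refine Finset.sum_nbij' (fun x => x + e) (fun x => x + e) ?_ ?_ ?_ ?_ ?_
    · intro x hx; exact S_add _ hx _ he
    · intro x hx; exact S_add _ hx _ he
    · intro x _; simp [add_assoc, CharTwo.add_self_eq_zero]
    · intro x _; simp [add_assoc, CharTwo.add_self_eq_zero]
    · intro x _; simp [add_assoc, CharTwo.add_self_eq_zero]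
  simp only [add_mul, psi_add, h, mul_neg, mul_one, Finset.sum_neg_distrib] at h1
  linarith

lemma psi_sum_univ (c : F) (hc : c ≠ 0) : ∑ x : F, psi F (x * c) = 0 := by
  obtain ⟨y, hy⟩ := psi_exists (F := F)
  exact aux_shift Finset.univ (by simp) c (y / c) (by simp) (by rwa [div_mul_cancel₀ _ hc])

open Classical in
/-- The nonzero elements of the subfield of order `2^s`. -/
def Estar (F : Type*) [Field F] [Fintype F] (s : ℕ) : Finset F :=
  Finset.univ.filter (fun e : F => e ≠ 0 ∧ e ^ (2 ^ s) = e)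

lemma mem_Estar {s : ℕ} {e : F} : e ∈ Estar F s ↔ e ≠ 0 ∧ e ^ (2 ^ s) = e := by
  simp [Estar]

lemma aux_arith (s : ℕ) : (2 ^ s - 1) * Mof s = 2 ^ (3 * s) - 1 := by
  have h1 : 1 ≤ 2 ^ s := Nat.one_le_two_pow
  have h2 : 1 ≤ 2 ^ (3 * s) := Nat.one_le_two_pow
  unfold Mof
  zify [h1, h2]
  ring

lemma aux_pow_iff (s : ℕ) (e : F) (he : e ≠ 0) : e ^ (2 ^ s) = e ↔ e ^ (2 ^ s - 1) = 1 := by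
  have h1 : 2 ^ s = 2 ^ s - 1 + 1 := (Nat.sub_add_cancel Nat.one_le_two_pow).symm
  constructor
  · intro h
    rw [h1, pow_succ] at h
    exact mul_right_cancel₀ he (by simpa using h)
  · intro h
    rw [h1, pow_succ, h, one_mul]

lemma Estar_card (s : ℕ) (hs : 1 ≤ s) (hF : Fintype.card F = 2 ^ (3 * s)) :
    (Estar F s).card = 2 ^ s - 1 := by
  classical
  have h2 : 1 < 2 ^ s := Nat.one_lt_two_pow (by omega)
  apply le_antisymm
  · refine le_trans (Finset.card_le_card ?_) (aux_card_pow (F := F) (n := 2 ^ s - 1) (by omega) 1)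
    intro e he
    rw [mem_Estar] at he
    simp [(aux_pow_iff s e he.1).1 he.2]
  · have h := Finset.card_le_mul_card_image_of_maps_to (f := fun x : F => x ^ (Mof s))
      (s := Finset.univ.filter (fun x : F => x ≠ 0)) (t := Estar F s) ?_ (Mof s) ?_
    · have hc : (Finset.univ.filter (fun x : F => x ≠ 0)).card = 2 ^ (3 * s) - 1 := by
        rw [Finset.filter_ne', Finset.card_erase_of_mem (Finset.mem_univ _), Finset.card_univ, hF]
      rw [hc, ← aux_arith, mul_comm] at h
      exact Nat.le_of_mul_le_mul_left h (by unfold Mof; positivity)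
    · intro x hx
      simp only [Finset.mem_filter, Finset.mem_univ, true_and] at hx
      rw [mem_Estar]
      refine ⟨pow_ne_zero _ hx, ?_⟩
      rw [aux_pow_iff _ _ (pow_ne_zero _ hx), ← pow_mul, mul_comm, aux_arith, ← hF]
      exact FiniteField.pow_card_sub_one_eq_one x hx
    · intro b _
      refine le_trans (Finset.card_le_card ?_) (aux_card_pow (n := Mof s) (by unfold Mof; positivity) b)
      intro x hx
      simp only [Finset.mem_filter, Finset.mem_univ, true_and] at hx ⊢
      exact hx.2

open Classical in
lemma orth (s : ℕ) (hs : 1 ≤ s) (hF : Fintype.card F = 2 ^ (3 * s)) (x : F) :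
    ∑ e ∈ Estar F s, psi F (e * x) = (if trFE s x = 0 then 2 ^ s else 0) - 1 := by
  haveI := aux_charP (F := F)
  have hpc : ∀ y : F, y ^ (2 ^ (3 * s)) = y := fun y => by rw [← hF]; exact FiniteField.pow_card y
  split_ifs with h
  · have : ∀ e ∈ Estar F s, psi F (e * x) = 1 := by
      intro e he
      rw [mem_Estar] at he
      rw [psi_eq_iff s hF, trFE_smul s e x he.2, h]
      simp
    rw [Finset.sum_congr rfl this]
    simp only [Finset.sum_const, Estar_card s hs hF, nsmul_eq_mul, mul_one]
    rw [Nat.cast_sub Nat.one_le_two_pow]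
    push_cast
    ring
  · obtain ⟨y, hy⟩ := psi_exists (F := F)
    have h0 : (0 : F) ∉ Estar F s := by simp [mem_Estar]
    have hins : ∀ e, e ∈ insert 0 (Estar F s) ↔ e ^ (2 ^ s) = e := by
      intro e
      rw [Finset.mem_insert, mem_Estar]
      by_cases he : e = 0
      · simp [he]
      · simp [he]
    have hz : ∑ e ∈ insert 0 (Estar F s), psi F (e * x) = 0 := by
      have hE : (trFE s y / trFE s x) ^ (2 ^ s) = trFE s y / trFE s x := by
        rw [div_pow, trFE_pow s y (hpc y), trFE_pow s x (hpc x)]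
      refine aux_shift _ ?_ x (trFE s y / trFE s x) ?_ ?_
      · intro a ha b hb
        rw [hins] at *
        rw [add_pow_char_pow, ha, hb]
      · rw [hins]; exact hE
      · rw [psi_eq_iff s hF, trFE_smul s _ x hE, div_mul_cancel₀ _ h, ← psi_eq_iff s hF]
        exact hy
    rw [Finset.sum_insert h0, zero_mul, psi_zero] at hz
    linarith

open Classical in
lemma ker_card (s : ℕ) (hs : 1 ≤ s) (hF : Fintype.card F = 2 ^ (3 * s)) :
    ((Finset.univ.filter (fun u : F => u ≠ 0 ∧ trFE s u = 0)).card : ℤ) = 2 ^ (2 * s) - 1 := by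
  have h1 : ∑ u : F, ∑ e ∈ Estar F s, psi F (e * u) = 0 := by
    rw [Finset.sum_comm]
    refine Finset.sum_eq_zero fun e he => ?_
    simp_rw [mul_comm e]
    exact psi_sum_univ e (mem_Estar.1 he).1
  simp_rw [orth s hs hF] at h1
  rw [Finset.sum_sub_distrib, ← Finset.sum_filter, Finset.sum_const, Finset.sum_const,
    Finset.card_univ, hF] at h1
  have h2 : Finset.univ.filter (fun u : F => trFE s u = 0) =
      insert 0 (Finset.univ.filter (fun u : F => u ≠ 0 ∧ trFE s u = 0)) := by
    ext u
    by_cases hu : u = 0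
    · subst hu; simp [show trFE s (0:F) = 0 by simp [trFE]]
    · simp [hu]
  rw [h2, Finset.card_insert_of_notMem (by simp)] at h1
  simp only [nsmul_eq_mul, mul_one] at h1
  push_cast at h1
  have h3 : (2 : ℤ) ^ (3 * s) = 2 ^ (2 * s) * 2 ^ s := by ring
  have h4 : (2 : ℤ) ^ s ≠ 0 := by positivity
  rw [h3] at h1
  have h5 := mul_right_cancel₀ h4 (sub_eq_zero.1 h1)
  linarith

end helpers

section kloosterman

set_option linter.unusedSectionVars false

variable {F G : Type*} [Field F] [Fintype F] [Algebra (ZMod 2) F]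
  [Field G] [Fintype G] [Algebra (ZMod 2) G] [Algebra F G]

lemma aux_tower : IsScalarTower (ZMod 2) F G := by
  refine IsScalarTower.of_algebraMap_eq' ?_
  exact Subsingleton.elim _ _

lemma aux_psi (x : G) : psi G x = psi F (Algebra.trace F G x) := by
  have := aux_tower (F := F) (G := G)
  unfold psi
  rw [Algebra.trace_trace]

lemma aux_finrank2 (hG : Fintype.card G = Fintype.card F ^ 2) : Module.finrank F G = 2 := by
  have h := Module.card_eq_pow_finrank (K := F) (V := G)
  rw [hG] at h
  exact (Nat.pow_right_injective (Fintype.one_lt_card (α := F)) h).symm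

lemma aux_tr (hG : Fintype.card G = Fintype.card F ^ 2) (x : G) :
    algebraMap F G (Algebra.trace F G x) = x + x ^ (Fintype.card F) := by
  rw [FiniteField.algebraMap_trace_eq_sum_pow, aux_finrank2 hG]
  simp [Finset.sum_range_succ]

lemma aux_norm (hG : Fintype.card G = Fintype.card F ^ 2) (x : G) :
    algebraMap F G (Algebra.norm F x) = x ^ (Fintype.card F + 1) := by
  rw [FiniteField.algebraMap_norm_eq_pow_sum, aux_finrank2 hG]
  simp [Finset.sum_range_succ, add_comm]

open Classical in
lemma norm_card (hG : Fintype.card G = Fintype.card F ^ 2) (b : F) (hb : b ≠ 0) :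
    (Finset.univ.filter (fun x : G => Algebra.norm F x = b)).card = Fintype.card F + 1 := by
  have hle : ∀ b ∈ Finset.univ.erase (0 : F),
      ((Finset.univ.erase (0 : G)).filter (fun x : G => Algebra.norm F x = b)).card
        ≤ Fintype.card F + 1 := by
    intro b _
    have hG0 := aux_card_pow (F := G) (n := Fintype.card F + 1) (by omega) (algebraMap F G b)
    refine le_trans (Finset.card_le_card ?_) hG0
    intro x hx
    simp only [Finset.mem_filter, Finset.mem_univ, true_and] at hx ⊢
    rw [← aux_norm hG, hx.2]
  have hfin : Module.Finite F G := Module.Finite.of_finite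
  have hsum := Finset.card_eq_sum_card_fiberwise (f := fun x : G => Algebra.norm F x)
    (s := Finset.univ.erase (0 : G)) (t := Finset.univ.erase (0 : F)) (by
      intro x hx
      simp only [Finset.coe_erase, Finset.coe_univ, Set.mem_sdiff, Set.mem_univ, true_and,
        Set.mem_singleton_iff] at hx ⊢
      rwa [Algebra.norm_eq_zero_iff])
  have h2 := (Finset.sum_eq_sum_iff_of_le hle).1 (by
    rw [← hsum, Finset.sum_const, Finset.card_erase_of_mem (Finset.mem_univ _),
      Finset.card_erase_of_mem (Finset.mem_univ _), Finset.card_univ, Finset.card_univ, hG,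
      smul_eq_mul, mul_comm, ← Nat.sq_sub_sq]
    ) b (by simp [hb])
  rw [← h2]
  congr 1
  ext x
  simp only [Finset.mem_filter, Finset.mem_univ, true_and, Finset.mem_erase, and_true]
  constructor
  · intro h
    refine ⟨?_, h⟩
    rintro rfl
    rw [Algebra.norm_zero] at h
    exact hb h.symm
  · exact fun h => h.2

open Classical in
lemma quad_card (b w : G) :
    (Finset.univ.filter (fun x : G => x ^ 2 + w * x + b = 0)).card ≤ 2 := by
  let p : Polynomial G := Polynomial.X ^ 2 + Polynomial.C w * Polynomial.X + Polynomial.C b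
  have hd : p.natDegree = 2 := by simp only [p]; compute_degree!
  have hp : p ≠ 0 := by
    intro h
    rw [h] at hd
    simp at hd
  have h : Finset.univ.filter (fun x : G => x ^ 2 + w * x + b = 0) ⊆ p.roots.toFinset := by
    intro x hx
    simp only [Finset.mem_filter, Finset.mem_univ, true_and] at hx
    simp [Polynomial.mem_roots hp, p, hx]
  refine (Finset.card_le_card h).trans ((Multiset.toFinset_card_le _).trans ?_)
  exact hd ▸ Polynomial.card_roots' p

lemma aux_sq_inj (K : Type*) [Field K] [Fintype K] [Algebra (ZMod 2) K] (x y : K) (h : x ^ 2 = y ^ 2) :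
    x = y := by
  have := aux_charP (F := K)
  have h1 : (x + y) ^ 2 = 0 := by rw [CharTwo.add_sq, h, CharTwo.add_self_eq_zero]
  exact CharTwo.add_eq_zero.1 (pow_eq_zero_iff (two_ne_zero)|>.1 h1)

open Classical in
lemma fibre_le (hG : Fintype.card G = Fintype.card F ^ 2) (b w : F) :
    ((Finset.univ.filter (fun x : G => Algebra.norm F x = b)).filter
        (fun x => Algebra.trace F G x = w)).card +
    ((Finset.univ.erase (0 : F)).filter (fun t => t + b / t = w)).card ≤ 2 := by
  have := aux_charP (F := F)
  have := aux_charP (F := G)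
  have hinj := (algebraMap F G).injective
  by_cases hw : w = 0
  · subst hw
    have h1 : ((Finset.univ.filter (fun x : G => Algebra.norm F x = b)).filter
        (fun x => Algebra.trace F G x = 0)).card ≤ 1 := by
      have key : ∀ x : G, Algebra.norm F x = b → Algebra.trace F G x = 0 →
          x ^ 2 = algebraMap F G b := by
        intro x hx ht
        have h3 := aux_tr hG x
        rw [ht, map_zero] at h3
        have h4 := CharTwo.add_eq_zero.1 h3.symm
        rw [← hx, aux_norm hG, pow_succ _ (Fintype.card F), ← h4, sq]
      rw [Finset.card_le_one]
      intro x hx y hy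
      simp only [Finset.mem_filter, Finset.mem_univ, true_and] at hx hy
      exact aux_sq_inj G x y ((key x hx.1 hx.2).trans (key y hy.1 hy.2).symm)
    have h2 : ((Finset.univ.erase (0 : F)).filter (fun t => t + b / t = 0)).card ≤ 1 := by
      have key : ∀ t : F, t ≠ 0 → t + b / t = 0 → t ^ 2 = b := by
        intro t ht h
        have h4 := CharTwo.add_eq_zero.1 h
        rw [sq, ← eq_div_iff ht]
        exact h4
      rw [Finset.card_le_one]
      intro x hx y hy
      simp only [Finset.mem_filter, Finset.mem_erase, Finset.mem_univ, and_true] at hx hy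
      exact aux_sq_inj F x y ((key x hx.1 hx.2).trans (key y hy.1 hy.2).symm)
    omega
  · rw [← Finset.card_image_of_injective ((Finset.univ.erase (0 : F)).filter _) hinj,
      ← Finset.card_union_of_disjoint]
    · refine le_trans (Finset.card_le_card ?_)
        (quad_card (algebraMap F G b) (algebraMap F G w))
      intro x hx
      simp only [Finset.mem_union, Finset.mem_image, Finset.mem_filter, Finset.mem_erase,
        Finset.mem_univ, and_true, true_and] at hx ⊢
      rcases hx with ⟨h1, h2⟩ | ⟨t, ⟨ht, h⟩, rfl⟩
      · rw [← h1, ← h2, aux_tr hG, aux_norm hG]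
        have : x ^ 2 + (x + x ^ Fintype.card F) * x + x ^ (Fintype.card F + 1) =
          (x ^ 2 + x ^ 2) + (x ^ (Fintype.card F + 1) + x ^ (Fintype.card F + 1)) := by ring
        rw [this, CharTwo.add_self_eq_zero, CharTwo.add_self_eq_zero, add_zero]
      · rw [← map_pow, ← map_mul, ← map_add, ← map_add, ← h]
        have : t ^ 2 + (t + b / t) * t + b = (t ^ 2 + t ^ 2) + (b + b) := by field_simp; ring
        rw [this, CharTwo.add_self_eq_zero, CharTwo.add_self_eq_zero, add_zero, map_zero]
    · rw [Finset.disjoint_left]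
      intro x hx hx2
      simp only [Finset.mem_image, Finset.mem_filter, Finset.mem_erase,
        Finset.mem_univ, and_true, true_and] at hx hx2
      obtain ⟨t, _, rfl⟩ := hx2
      apply hw
      rw [← hx.2]
      apply hinj
      rw [aux_tr hG, ← map_pow, FiniteField.pow_card, CharTwo.add_self_eq_zero, map_zero]

open Classical in
lemma kloost (hG : Fintype.card G = Fintype.card F ^ 2) (b : F) (hb : b ≠ 0) :
    ∑ x ∈ Finset.univ.filter (fun x : G => Algebra.norm F x = b), psi G x =
      - ∑ t ∈ Finset.univ.erase (0 : F), psi F (t + b / t) := by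
  have hpos : 0 < Fintype.card F := Fintype.card_pos
  have heq := (Finset.sum_eq_sum_iff_of_le (s := Finset.univ) (g := fun _ => 2)
    (fun w _ => fibre_le (G := G) hG b w)).1 (by
      rw [Finset.sum_add_distrib, ← Finset.card_eq_sum_card_fiberwise (f := fun x : G => Algebra.trace F G x)
          (by intro x _; simp),
        ← Finset.card_eq_sum_card_fiberwise (f := fun t : F => t + b / t)
          (by intro x _; simp), norm_card hG b hb,
        Finset.card_erase_of_mem (Finset.mem_univ _), Finset.sum_const, Finset.card_univ,
        smul_eq_mul]
      omega)
  have h1 : ∑ x ∈ Finset.univ.filter (fun x : G => Algebra.norm F x = b), psi G x +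
      ∑ t ∈ Finset.univ.erase (0 : F), psi F (t + b / t) = 0 := by
    simp_rw [aux_psi (F := F) (G := G)]
    rw [← Finset.sum_fiberwise' _ (fun x : G => Algebra.trace F G x) (psi F),
      ← Finset.sum_fiberwise' _ (fun t : F => t + b / t) (psi F), ← Finset.sum_add_distrib]
    simp_rw [Finset.sum_const, ← add_smul]
    rw [Finset.sum_congr rfl (fun w hw => by rw [heq w hw]), ← Finset.smul_sum]
    have := psi_sum_univ (1 : F) one_ne_zero
    simp only [mul_one] at this
    rw [this, smul_zero]
  linarith

end kloosterman

section final

set_option linter.unusedSectionVars false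

variable {F : Type*} [Field F] [Fintype F] [Algebra (ZMod 2) F]

open Classical in
/-- `D` as a finset. -/
def Dfin (F : Type*) [Field F] [Fintype F] (s : ℕ) : Finset F :=
  (Finset.univ.erase (0 : F)).filter (fun u => trFE s u⁻¹ = 0)

lemma mem_Dfin {s : ℕ} {u : F} : u ∈ Dfin F s ↔ u ≠ 0 ∧ trFE s u⁻¹ = 0 := by
  simp [Dfin]

lemma psiSum_eq (s : ℕ) (c : F) : psiSum F c (Dset F s) = ∑ u ∈ Dfin F s, psi F (c * u) := by
  have : Dset F s = (Dfin F s : Set F) := by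
    ext u
    simp [mem_Dfin, Dset]
  rw [psiSum, this, finsum_mem_coe_finset]

open Classical in
lemma kl_sum (s : ℕ) (hs : 1 ≤ s) (hF : Fintype.card F = 2 ^ (3 * s)) (c : F) (hc : c ≠ 0) :
    ∑ e ∈ Estar F s, ∑ t ∈ Finset.univ.erase (0 : F), psi F (t + c * e / t) =
      2 ^ s * psiSum F c (Dset F s) + 1 := by
  have h1 : ∀ e ∈ Estar F s, ∑ t ∈ Finset.univ.erase (0 : F), psi F (t + c * e / t) =
      ∑ u ∈ Finset.univ.erase (0 : F), psi F (c * u) * psi F (e * u⁻¹) := by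
    intro e _
    refine Finset.sum_nbij' (fun t => t / c) (fun u => c * u) ?_ ?_ ?_ ?_ ?_
    · intro t ht; simp only [Finset.mem_erase, Finset.mem_univ, and_true] at *
      exact div_ne_zero ht hc
    · intro t ht; simp only [Finset.mem_erase, Finset.mem_univ, and_true] at *
      exact mul_ne_zero hc ht
    · intro t _; field_simp
    · intro t _; field_simp
    · intro t _
      rw [← psi_add]
      congr 1
      rw [inv_div]
      field_simp
  rw [Finset.sum_congr rfl h1, Finset.sum_comm]
  simp_rw [← Finset.mul_sum, orth s hs hF, mul_sub, mul_one]
  rw [Finset.sum_sub_distrib]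
  have h2 : ∑ u ∈ Finset.univ.erase (0 : F), psi F (c * u) = -1 := by
    have h3 := psi_sum_univ c hc
    rw [← Finset.add_sum_erase _ _ (Finset.mem_univ (0 : F)), zero_mul, psi_zero] at h3
    simp_rw [mul_comm c]
    linarith
  rw [h2, psiSum_eq, Dfin, Finset.sum_filter, Finset.mul_sum, sub_neg_eq_add]
  congr 1
  refine Finset.sum_congr rfl fun u _ => ?_
  split_ifs <;> ring

lemma Dfin_card (s : ℕ) (hs : 1 ≤ s) (hF : Fintype.card F = 2 ^ (3 * s)) :
    ((Dfin F s).card : ℤ) = 2 ^ (2 * s) - 1 := by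
  classical
  rw [← ker_card s hs hF]
  congr 1
  refine Finset.card_nbij' (fun u => u⁻¹) (fun u => u⁻¹) ?_ ?_ ?_ ?_
  · intro u hu
    have hu' := mem_Dfin.1 (Finset.mem_coe.1 hu)
    simp [hu']
  · intro u hu
    simp only [Finset.coe_filter, Finset.mem_univ, true_and, Set.mem_ofPred_eq] at hu
    exact Finset.mem_coe.2 (mem_Dfin.2 (by simpa using hu))
  · intro u _; simp
  · intro u _; simp

lemma D_iff (s : ℕ) (hF : Fintype.card F = 2 ^ (3 * s)) (u : F) (hu : u ≠ 0) :
    trFE s (u ^ (2 ^ s + 1)) = 0 ↔ trFE s u⁻¹ = 0 := by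
  have h3 : (u ^ 2 ^ (2 * s)) ^ (2 ^ s) = u := by
    rw [← pow_mul, ← pow_add, show 2 * s + s = 3 * s by ring, ← hF, FiniteField.pow_card]
  have h2 : (u ^ 2 ^ s) ^ (2 ^ s) = u ^ 2 ^ (2 * s) := by
    rw [← pow_mul, ← pow_add, two_mul]
  have h4 : (u ^ 2 ^ s) ^ (2 ^ (2 * s)) = u := by
    rw [← pow_mul, ← pow_add, show s + 2 * s = 3 * s by ring, ← hF, FiniteField.pow_card]
  have h : trFE s (u ^ (2 ^ s + 1)) = (u * u ^ 2 ^ s * u ^ 2 ^ (2 * s)) * trFE s u⁻¹ := by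
    unfold trFE
    rw [pow_succ, mul_pow, mul_pow, h2, h4, inv_pow, inv_pow]
    have := pow_ne_zero (2 ^ s) hu
    have := pow_ne_zero (2 ^ (2 * s)) hu
    generalize u ^ 2 ^ s = v at *
    generalize u ^ 2 ^ (2 * s) = w at *
    field_simp
    ring
  rw [h]
  simp [hu]

lemma Sa_formula (s : ℕ) (hs : 1 ≤ s) (hF : Fintype.card F = 2 ^ (3 * s)) (ω : F) (a : ℤ) :
    (2 ^ s - 1) * psiSum F (ω ^ a) (Dset F s) =
      2 ^ s * ((Sa s ω a).ncard : ℤ) - (2 ^ (2 * s) - 1) := by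
  classical
  have hS : Sa s ω a = ((Dfin F s).filter (fun u => trFE s (ω ^ a * u) = 0) : Finset F) := by
    ext u
    simp only [Sa, Set.mem_ofPred_eq, Finset.coe_filter, mem_Dfin]
    constructor
    · rintro ⟨h1, h2, h3⟩
      exact ⟨⟨h1, (D_iff s hF u h1).1 h2⟩, h3⟩
    · rintro ⟨⟨h1, h2⟩, h3⟩
      exact ⟨h1, (D_iff s hF u h1).2 h2, h3⟩
  rw [hS, Set.ncard_coe_finset, ← Dfin_card s hs hF, psiSum_eq]
  have h1 : ∀ e ∈ Estar F s, ∑ u ∈ Dfin F s, psi F (ω ^ a * u) =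
      ∑ u ∈ Dfin F s, psi F (e * (ω ^ a * u)) := by
    intro e he
    rw [mem_Estar] at he
    obtain ⟨he0, he⟩ := he
    have hei : (e⁻¹) ^ (2 ^ s) = e⁻¹ := by rw [inv_pow, he]
    refine Finset.sum_nbij' (fun t => e⁻¹ * t) (fun t => e * t) ?_ ?_ ?_ ?_ ?_
    · intro t ht
      rw [mem_Dfin] at *
      refine ⟨mul_ne_zero (inv_ne_zero he0) ht.1, ?_⟩
      rw [mul_inv, inv_inv, trFE_smul s _ _ he, ht.2, mul_zero]
    · intro t ht
      rw [mem_Dfin] at *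
      refine ⟨mul_ne_zero he0 ht.1, ?_⟩
      rw [mul_inv, trFE_smul s _ _ hei, ht.2, mul_zero]
    · intro t _; field_simp
    · intro t _; field_simp
    · intro t _
      congr 1
      field_simp
  have h2 := Finset.sum_congr (rfl : Estar F s = Estar F s) h1
  rw [Finset.sum_const, Estar_card s hs hF, nsmul_eq_mul, Nat.cast_sub Nat.one_le_two_pow,
    Finset.sum_comm] at h2
  push_cast at h2
  rw [h2]
  simp_rw [orth s hs hF]
  rw [Finset.sum_sub_distrib, ← Finset.sum_filter, Finset.sum_const, Finset.sum_const]
  simp only [nsmul_eq_mul]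
  ring

lemma omega_M (s : ℕ) (hF : Fintype.card F = 2 ^ (3 * s)) (ω : F) (h0 : ω ≠ 0) (t : ℤ) :
    ω ^ ((Mof s : ℤ) * t) ∈ Estar F s := by
  have hne : ω ^ ((Mof s : ℤ) * t) ≠ 0 := zpow_ne_zero _ h0
  rw [mem_Estar]
  refine ⟨hne, ?_⟩
  rw [aux_pow_iff _ _ hne, ← zpow_natCast, ← zpow_mul,
    show (Mof s : ℤ) * t * ((2 ^ s - 1 : ℕ) : ℤ) = (((2 ^ s - 1) * Mof s : ℕ) : ℤ) * t by
      push_cast; ring, aux_arith, ← hF, zpow_mul, zpow_natCast,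
    FiniteField.pow_card_sub_one_eq_one ω h0, one_zpow]

lemma Sa_congr (s : ℕ) (hF : Fintype.card F = 2 ^ (3 * s)) (ω : F) (h0 : ω ≠ 0) (a : ℤ) :
    Sa s ω ((a : ZMod (Mof s)).val : ℤ) = Sa s ω a := by
  have hM : NeZero (Mof s) := ⟨by unfold Mof; positivity⟩
  have ha : (a : ℤ) = ((a : ZMod (Mof s)).val : ℤ) + (Mof s : ℤ) * (a / (Mof s : ℤ)) := by
    rw [ZMod.val_intCast, Int.emod_add_mul_ediv]
  obtain ⟨h1, h2⟩ := mem_Estar.1 (omega_M s hF ω h0 (a / (Mof s : ℤ)))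
  have key : ∀ u : F, trFE s (ω ^ a * u) = 0 ↔
      trFE s (ω ^ ((a : ZMod (Mof s)).val : ℤ) * u) = 0 := by
    intro u
    have : ω ^ a * u = ω ^ ((Mof s : ℤ) * (a / (Mof s : ℤ))) *
        (ω ^ ((a : ZMod (Mof s)).val : ℤ) * u) := by
      conv_lhs => rw [ha, zpow_add₀ h0]
      ring
    rw [this, trFE_smul s _ _ h2, mul_eq_zero, or_iff_right h1]
  ext u
  simp only [Sa, Set.mem_ofPred_eq, key]

lemma omega_ne (s : ℕ) (hs : 1 ≤ s) (hF : Fintype.card F = 2 ^ (3 * s)) (ω : F)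
    (hωgen : ∀ x : F, x ≠ 0 → ∃ n : ℕ, x = ω ^ n) : ω ≠ 0 := by
  classical
  rintro rfl
  have h : (Finset.univ : Finset F) ⊆ {0, 1} := by
    intro x _
    by_cases hx : x = 0
    · simp [hx]
    · obtain ⟨n, rfl⟩ := hωgen x hx
      rcases n with _ | n
      · simp
      · simp
  have h2 := (Finset.card_le_card h).trans Finset.card_le_two
  rw [Finset.card_univ, hF] at h2
  have h3 : 2 ^ 3 ≤ 2 ^ (3 * s) := Nat.pow_le_pow_right (by norm_num) (by omega)
  omega

lemma omega_dvd (s : ℕ) (hs : 1 ≤ s) (hF : Fintype.card F = 2 ^ (3 * s)) (ω : F) (h0 : ω ≠ 0)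
    (hωgen : ∀ x : F, x ≠ 0 → ∃ n : ℕ, x = ω ^ n) (m : ℤ) (hm : ω ^ m ∈ Estar F s) :
    (Mof s : ℤ) ∣ m := by
  classical
  have hord : orderOf (Units.mk0 ω h0) = 2 ^ (3 * s) - 1 := by
    rw [orderOf_eq_card_of_forall_mem_zpowers, Nat.card_eq_fintype_card, Fintype.card_units, hF]
    intro x
    obtain ⟨n, hn⟩ := hωgen x x.ne_zero
    exact ⟨n, by ext; simp [hn]⟩
  obtain ⟨h1, h2⟩ := mem_Estar.1 hm
  rw [aux_pow_iff _ _ h1, ← zpow_natCast, ← zpow_mul] at h2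
  have h3 : (Units.mk0 ω h0) ^ (m * ((2 ^ s - 1 : ℕ) : ℤ)) = 1 := by
    ext
    push_cast
    simpa using h2
  have h4 := orderOf_dvd_iff_zpow_eq_one.2 h3
  rw [hord, ← aux_arith, Nat.cast_mul, mul_comm] at h4
  have h5 : 1 < 2 ^ s := Nat.one_lt_two_pow (by omega)
  exact Int.dvd_of_mul_dvd_mul_right (by
    have : 0 < 2 ^ s - 1 := by omega
    exact_mod_cast this.ne') h4

end final

theorem statement14 (s : ℕ) (hs : 1 ≤ s) (F G : Type*) [Field F] [Fintype F] [Algebra (ZMod 2) F]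
    [Field G] [Fintype G] [Algebra (ZMod 2) G]
    (hF : Fintype.card F = 2 ^ (3 * s)) (hG : Fintype.card G = 2 ^ (6 * s))
    (f : F →+* G) (γ : G) (hγ : ∀ x : G, x ≠ 0 → ∃ n : ℕ, x = γ ^ n)
    (ω : F) (hω : f ω = γ ^ (2 ^ (3 * s) + 1))
    (hωgen : ∀ x : F, x ≠ 0 → ∃ n : ℕ, x = ω ^ n) :
    ∀ a : ℤ,
      (∑ᶠ x ∈ cyc (Mof s) γ a, psi G x) = -(2 ^ s) * psiSum F (ω ^ a) (Dset F s) - 1 ∧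
      ((a : ZMod (Mof s)) ∈ T1 s ω → (∑ᶠ x ∈ cyc (Mof s) γ a, psi G x) = 2 ^ s - 1) ∧
      ((a : ZMod (Mof s)) ∈ T2 s ω →
        (∑ᶠ x ∈ cyc (Mof s) γ a, psi G x) = -(2 ^ (2 * s)) + 2 ^ s - 1) ∧
      ((a : ZMod (Mof s)) ∈ T3 s ω →
        (∑ᶠ x ∈ cyc (Mof s) γ a, psi G x) = 2 ^ (2 * s) + 2 ^ s - 1) := by
  classical
  letI : Algebra F G := f.toAlgebra
  have hfa : ∀ x, algebraMap F G x = f x := fun _ => rfl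
  have hG2 : Fintype.card G = Fintype.card F ^ 2 := by
    rw [hG, hF, ← pow_mul]
    congr 1
    ring
  have h0 := omega_ne s hs hF ω hωgen
  have hγ0 : γ ≠ 0 := by
    rintro rfl
    rw [zero_pow (by positivity), map_eq_zero] at hω
    exact h0 hω
  have hN : Algebra.norm F γ = ω := by
    apply f.injective
    rw [← hfa, aux_norm hG2, hω, hF]
  intro a
  have hcyc : ∀ x, x ∈ cyc (Mof s) γ a ↔ ∃ e ∈ Estar F s, Algebra.norm F x = ω ^ a * e := by
    intro x
    constructor
    · rintro ⟨t, rfl⟩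
      refine ⟨_, omega_M s hF ω h0 t, ?_⟩
      rw [← zpow_add₀ h0]
      apply f.injective
      rw [← hfa, aux_norm hG2, map_zpow₀, hω, hF, ← zpow_natCast, ← zpow_natCast, ← zpow_mul,
        ← zpow_mul, mul_comm]
    · rintro ⟨e, he, hx⟩
      have hx0 : x ≠ 0 := by
        rintro rfl
        rw [Algebra.norm_zero] at hx
        exact mul_ne_zero (zpow_ne_zero a h0) (mem_Estar.1 he).1 hx.symm
      obtain ⟨n, rfl⟩ := hγ x hx0
      rw [map_pow, hN] at hx
      have h1 : ω ^ ((n : ℤ) - a) = e := by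
        rw [zpow_sub₀ h0, zpow_natCast, hx, mul_div_cancel_left₀ _ (zpow_ne_zero a h0)]
      obtain ⟨t, ht⟩ := omega_dvd s hs hF ω h0 hωgen ((n : ℤ) - a) (h1 ▸ he)
      exact ⟨t, by rw [← ht, add_sub_cancel, zpow_natCast]⟩
  have hset : cyc (Mof s) γ a = ((Estar F s).biUnion (fun e =>
      Finset.univ.filter (fun x : G => Algebra.norm F x = ω ^ a * e)) : Finset G) := by
    ext x
    simp [hcyc]
  have hmain : (∑ᶠ x ∈ cyc (Mof s) γ a, psi G x) =
      -(2 ^ s) * psiSum F (ω ^ a) (Dset F s) - 1 := by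
    rw [hset, finsum_mem_coe_finset, Finset.sum_biUnion]
    · rw [Finset.sum_congr rfl (fun e he => kloost hG2 (ω ^ a * e)
        (mul_ne_zero (zpow_ne_zero a h0) (mem_Estar.1 he).1)), Finset.sum_neg_distrib,
        kl_sum s hs hF _ (zpow_ne_zero a h0)]
      ring
    · intro e _ e' _ hne
      rw [Function.onFun, Finset.disjoint_left]
      intro x hx hx'
      simp only [Finset.mem_filter, Finset.mem_univ, true_and] at hx hx'
      exact hne (mul_left_cancel₀ (zpow_ne_zero a h0) (hx.symm.trans hx'))
  have hform := Sa_formula s hs hF ω a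
  have hq : (2 : ℤ) ^ s - 1 ≠ 0 := by
    have h5 : 1 < (2 : ℤ) ^ s := one_lt_pow₀ (by norm_num) (by omega)
    linarith
  have hq2 : (2 : ℤ) ^ (2 * s) = 2 ^ s * 2 ^ s := by ring
  refine ⟨hmain, ?_, ?_, ?_⟩
  · intro h
    simp only [T1, Set.mem_ofPred_eq, Sa_congr s hF ω h0] at h
    rw [h, Nat.cast_sub Nat.one_le_two_pow, hq2] at hform
    push_cast at hform
    have : psiSum F (ω ^ a) (Dset F s) = -1 := mul_left_cancel₀ hq (by rw [hform]; ring)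
    rw [hmain, this]
    ring
  · intro h
    simp only [T2, Set.mem_ofPred_eq, Sa_congr s hF ω h0] at h
    rw [h, Nat.cast_mul, Nat.cast_sub Nat.one_le_two_pow, hq2] at hform
    push_cast at hform
    have : psiSum F (ω ^ a) (Dset F s) = 2 ^ s - 1 := mul_left_cancel₀ hq (by rw [hform]; ring)
    rw [hmain, this]
    ring
  · intro h
    simp only [T3, Set.mem_ofPred_eq, Sa_congr s hF ω h0] at h
    rw [h, hq2] at hform
    push_cast at hform
    have : psiSum F (ω ^ a) (Dset F s) = -2 ^ s - 1 := mul_left_cancel₀ hq (by rw [hform]; ring)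
    rw [hmain, this]
    ring
end
end

section
/- The sets R'_0, R'_1, R'_2, R'_3 partition G and form a three-class translation association scheme on the additive group of G: there exist natural numbers p^m_{k,l} for 0 ≤ k, l, m ≤ 3 such that for all k, l, m and every d ∈ R'_m, the number of z ∈ G with z ∈ R'_k and d + z ∈ R'_l equals p^m_{k,l} (note that in characteristic 2 one has d − z = d + z, so the relations are symmetric). -/
noncomputable section

open scoped BigOperators

section PartA

variable {F : Type*} [Field F]

/-- If `t` is not fixed by `σ` (of order three) then `1, t, t²` are independent over the fixed field. -/
theorem A1_indep (σ : F →+* F) (h3 : ∀ x, σ (σ (σ x)) = x) (t A B C : F) (ht : σ t ≠ t)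
    (hA : σ A = A) (hB : σ B = B) (hC : σ C = C) (h : A + B * t + C * t ^ 2 = 0) :
    A = 0 ∧ B = 0 ∧ C = 0 := by
  have h1 : A + B * σ t + C * (σ t) ^ 2 = 0 := by
    have := congrArg σ h
    simpa [hA, hB, hC] using this
  have h2 : B + C * (t + σ t) = 0 := by
    have : (σ t - t) * (B + C * (t + σ t)) = 0 := by linear_combination h1 - h
    exact (mul_eq_zero.mp this).resolve_left (sub_ne_zero.mpr ht)
  have h4 : B + C * (σ t + σ (σ t)) = 0 := by
    have := congrArg σ h2
    simpa [hA, hB, hC] using this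
  have h5 : σ (σ t) ≠ t := by
    intro h
    apply ht
    have := congrArg σ h
    rw [h3] at this
    exact this.symm
  have hC0 : C = 0 := by
    have : (σ (σ t) - t) * C = 0 := by linear_combination h4 - h2
    exact (mul_eq_zero.mp this).resolve_left (sub_ne_zero.mpr h5)
  subst hC0
  have hB0 : B = 0 := by simpa using h2
  subst hB0
  refine ⟨by simpa using h, rfl, rfl⟩

theorem A2_span (σ : F →+* F) (p v r : F)
    (hp : p + σ p + σ (σ p) = 0) (hv : v + σ v + σ (σ v) = 0) (hr : r + σ r + σ (σ r) = 0)
    (hd : p * σ v - σ p * v ≠ 0) :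
    ∃ α β, σ α = α ∧ σ β = β ∧ r = α * p + β * v := by
  have key : ∀ a b : F, a + σ a + σ (σ a) = 0 → b + σ b + σ (σ b) = 0 →
      σ (a * σ b - σ a * b) = a * σ b - σ a * b := by
    intro a b ha hb
    simp only [map_sub, map_mul]
    linear_combination σ a * hb - σ b * ha
  refine ⟨(r * σ v - σ r * v) / (p * σ v - σ p * v), (p * σ r - σ p * r) / (p * σ v - σ p * v),
    ?_, ?_, ?_⟩
  · rw [map_div₀, key r v hr hv, key p v hp hv]
  · rw [map_div₀, key p r hp hr, key p v hp hv]
  · rw [div_mul_eq_mul_div, div_mul_eq_mul_div, ← add_div, eq_div_iff hd]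
    ring

theorem A3_two (σ : F →+* F) (h3 : ∀ x, σ (σ (σ x)) = x) (p r v w : F)
    (hp0 : p ≠ 0) (hr0 : r ≠ 0) (hv0 : v ≠ 0)
    (hp : p + σ p + σ (σ p) = 0) (hv : v + σ v + σ (σ v) = 0) (hr : r + σ r + σ (σ r) = 0)
    (hw : w + σ w + σ (σ w) = 0) (h : p * r = v * w) :
    ∃ e, σ e = e ∧ e ≠ 0 ∧ (v = e * p ∨ v = e * r) := by
  by_cases hd : p * σ v - σ p * v = 0
  · refine ⟨v / p, ?_, div_ne_zero hv0 hp0, Or.inl (by field_simp)⟩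
    have : σ p ≠ 0 := (map_ne_zero σ).mpr hp0
    rw [map_div₀, div_eq_div_iff this hp0]
    linear_combination hd
  · obtain ⟨α, β, hα, hβ, e1⟩ := A2_span σ p v r hp hv hr hd
    obtain ⟨α', β', hα', hβ', e2⟩ := A2_span σ p v w hp hv hw hd
    have ht : σ (v / p) ≠ v / p := by
      intro h
      apply hd
      have : σ p ≠ 0 := (map_ne_zero σ).mpr hp0
      rw [map_div₀, div_eq_div_iff this hp0] at h
      linear_combination h
    have := A1_indep σ h3 (v / p) α (β - α') (-β') ht hα (by simp [hβ, hα']) (by simp [hβ']) (by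
      field_simp
      rw [e1, e2] at h
      linear_combination h)
    obtain ⟨ha, hb, hc⟩ := this
    subst ha
    have hβ0 : β ≠ 0 := by
      rintro rfl
      apply hr0; simp [e1]
    refine ⟨β⁻¹, by simp [hβ], inv_ne_zero hβ0, Or.inr ?_⟩
    rw [e1]; field_simp; simp

/-- The set `P_y`. -/
def Pset (σ : F →+* F) (y : F) : Set F :=
  {v | v ≠ 0 ∧ v + σ v + σ (σ v) = 0 ∧ y / v + σ (y / v) + σ (σ (y / v)) = 0}

theorem A4_eq (σ : F →+* F) (h3 : ∀ x, σ (σ (σ x)) = x) (y p : F) (hy : y ≠ 0)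
    (hp : p ∈ Pset σ y) :
    Pset σ y = (fun e => e * p) '' {e | σ e = e ∧ e ≠ 0} ∪
      (fun e => e * (y / p)) '' {e | σ e = e ∧ e ≠ 0} := by
  obtain ⟨hp0, hp1, hp2⟩ := hp
  ext v
  constructor
  · rintro ⟨hv0, hv1, hv2⟩
    obtain ⟨e, h1, h2, h | h⟩ := A3_two σ h3 p (y / p) v (y / v) hp0 (div_ne_zero hy hp0) hv0 hp1 hv1
      hp2 hv2 (by field_simp)
    · exact Or.inl ⟨e, ⟨h1, h2⟩, h.symm⟩
    · exact Or.inr ⟨e, ⟨h1, h2⟩, h.symm⟩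
  · rintro (⟨e, ⟨h1, h2⟩, rfl⟩ | ⟨e, ⟨h1, h2⟩, rfl⟩)
    · refine ⟨mul_ne_zero h2 hp0, ?_, ?_⟩
      · simp only [map_mul, h1]; linear_combination e * hp1
      · have : y / (e * p) = e⁻¹ * (y / p) := by field_simp
        simp only [this]
        simp only [map_mul, map_inv₀, h1]; 
        linear_combination e⁻¹ * hp2
    · refine ⟨mul_ne_zero h2 (div_ne_zero hy hp0), ?_, ?_⟩
      · simp only [map_mul, h1]; linear_combination e * hp2
      · have : y / (e * (y / p)) = e⁻¹ * p := by field_simp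
        simp only [this]
        simp only [map_mul, map_inv₀, h1]; 
        linear_combination e⁻¹ * hp1

theorem A5_card [Finite F] [CharP F 2] (σ : F →+* F) (h3 : ∀ x, σ (σ (σ x)) = x) (y : F) (hy : y ≠ 0)
    (n : ℕ) (hn : {e : F | σ e = e ∧ e ≠ 0}.ncard = n) :
    (y + σ y + σ (σ y) = 0 ∧ (Pset σ y).ncard = n) ∨
    (y + σ y + σ (σ y) ≠ 0 ∧ ((Pset σ y).ncard = 0 ∨ (Pset σ y).ncard = 2 * n)) := by
  have hinj : ∀ p : F, p ≠ 0 → ((fun e => e * p) '' {e | σ e = e ∧ e ≠ 0}).ncard = n := by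
    intro p hp
    rw [Set.ncard_image_of_injective _ (mul_left_injective₀ hp), hn]
  by_cases ht : y + σ y + σ (σ y) = 0
  · left
    refine ⟨ht, ?_⟩
    obtain ⟨w, hw⟩ : ∃ w : F, w ^ 2 = y := by
      have := Fintype.ofFinite F
      obtain ⟨w, hw⟩ := (bijective_frobenius F 2).2 y
      exact ⟨w, by simpa [frobenius_def] using hw⟩
    have hw0 : w ≠ 0 := by rintro rfl; apply hy; rw [← hw]; simp
    have hyw : y / w = w := by rw [← hw]; field_simp
    have htw : w + σ w + σ (σ w) = 0 := by
      have : (w + σ w + σ (σ w)) ^ 2 = 0 := by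
        rw [add_pow_char, add_pow_char, ← map_pow, ← map_pow, ← map_pow, hw, ht]
      exact pow_eq_zero_iff (two_ne_zero) |>.mp this
    rw [A4_eq σ h3 y w hy ⟨hw0, htw, by rw [hyw]; exact htw⟩, hyw, Set.union_self, hinj w hw0]
  · right
    refine ⟨ht, ?_⟩
    rcases (Pset σ y).eq_empty_or_nonempty with h | ⟨p, hp⟩
    · left; rw [h]; simp
    · right
      have hp' := hp
      obtain ⟨hp0, hp1, hp2⟩ := hp'
      rw [A4_eq σ h3 y p hy hp, Set.ncard_union_eq, hinj p hp0, hinj _ (div_ne_zero hy hp0), two_mul]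
      rw [Set.disjoint_left]
      rintro x ⟨e, ⟨h1, h2⟩, rfl⟩ ⟨e', ⟨h1', h2'⟩, h⟩
      apply ht
      have : y = e / e' * p ^ 2 := by
        simp only at h
        field_simp at h ⊢
        linear_combination h
      rw [this]
      simp only [map_mul, map_div₀, h1, h1', map_pow]
      have : (p + σ p + σ (σ p)) ^ 2 = p ^ 2 + (σ p) ^ 2 + (σ (σ p)) ^ 2 := by
        rw [add_pow_char, add_pow_char]
      rw [hp1] at this
      linear_combination - e / e' * this

end PartA
section PartB

set_option linter.unusedSectionVars false

open Finset Classical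

variable {F G : Type*} [Field F] [Fintype F] [Field G] [Fintype G] [Algebra F G]

/-- Fixed elements. -/
def Efin (σ : F →+* F) : Finset F := univ.filter (fun e => σ e = e)

/-- Trace. -/
def trS (σ : F →+* F) (x : F) : F := x + σ x + σ (σ x)

/-- Trace zero elements. -/
def Vfin (σ : F →+* F) : Finset F := univ.filter (fun e => trS σ e = 0)

theorem trS_add (σ : F →+* F) (x y : F) : trS σ (x + y) = trS σ x + trS σ y := by
  simp only [trS, map_add]; ring

theorem trS_mul (σ : F →+* F) (e x : F) (he : σ e = e) : trS σ (e * x) = e * trS σ x := by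
  simp only [trS, map_mul, he]; ring

theorem trS_fix (σ : F →+* F) (h3 : ∀ x, σ (σ (σ x)) = x) (x : F) : σ (trS σ x) = trS σ x := by
  simp only [trS, map_add, h3]; ring

theorem trS_E [CharP F 2] (σ : F →+* F) (x : F) (hx : σ x = x) : trS σ x = x := by
  have : (2 : F) = 0 := CharTwo.two_eq_zero
  simp only [trS, hx]
  linear_combination x * this

theorem B0 [CharP F 2] (σ : F →+* F) (h3 : ∀ x, σ (σ (σ x)) = x) :
    ∃ ψ : AddChar F ℂ, ψ.IsPrimitive ∧
      ∀ z, ∑ e ∈ Efin σ, ψ (e * z) = if trS σ z = 0 then ((Efin σ).card : ℂ) else 0 := by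
  set χ := AddChar.FiniteField.primitiveChar_to_Complex F with hχ
  have hprim : χ.IsPrimitive := AddChar.FiniteField.primitiveChar_to_Complex_isPrimitive F
  obtain ⟨a, ha⟩ : ∃ a, χ a ≠ 1 := by
    by_contra! h
    apply hprim (one_ne_zero)
    ext x
    simp [h]
  let ψ : AddChar F ℂ :=
    { toFun := fun x => χ (a * trS σ x)
      map_zero_eq_one' := by simp [trS]
      map_add_eq_mul' := by
        intro x y
        rw [trS_add, mul_add, AddChar.map_add_eq_mul] }
  have hψ : ∀ x, ψ x = χ (a * trS σ x) := fun x => rfl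
  have h1 : ψ 1 ≠ 1 := by
    rw [hψ, trS_E σ 1 (map_one σ), mul_one]; exact ha
  refine ⟨ψ, AddChar.IsPrimitive.of_ne_one (fun h => h1 (by rw [h]; rfl)), ?_⟩
  intro z
  have e1 : ∀ e ∈ Efin σ, ψ (e * z) = χ (a * (e * trS σ z)) := by
    intro e he
    rw [hψ, trS_mul σ e z (by simpa [Efin] using he)]
  rw [sum_congr rfl e1]
  split_ifs with h
  · simp [h]
  · -- shift
    have hE : ∀ e, e ∈ Efin σ ↔ σ e = e := by simp [Efin]
    have hf := trS_fix σ h3 z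
    set t := trS σ z
    have key : ∑ e ∈ Efin σ, χ (a * (e * t)) = χ a * ∑ e ∈ Efin σ, χ (a * (e * t)) := by
      rw [mul_sum]
      refine sum_bij' (fun e _ => e - t⁻¹) (fun e _ => e + t⁻¹) ?_ ?_ ?_ ?_ ?_
      · intro e he; rw [hE] at *; simp [he, hf]
      · intro e he; rw [hE] at *; simp [he, hf]
      · intro e he; simp
      · intro e he; simp
      · intro e he
        rw [← AddChar.map_add_eq_mul]
        congr 1
        field_simp
        ring
    have : (χ a - 1) * ∑ e ∈ Efin σ, χ (a * (e * t)) = 0 := by linear_combination -key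
    exact (mul_eq_zero.mp this).resolve_left (sub_ne_zero.mpr ha)

theorem B1 (ψ : AddChar F ℂ) (hψ : ψ.IsPrimitive) (b : F) :
    ∑ x, ψ (x * b) = if b = 0 then (Fintype.card F : ℂ) else 0 := by
  have := AddChar.sum_mulShift b hψ
  rw [this]; push_cast; rfl

theorem B2 [CharP F 2] (σ : F →+* F) (ψ : AddChar F ℂ) (hψ : ψ.IsPrimitive) (q : ℕ) (hq : q ≠ 0)
    (hF : Fintype.card F = q ^ 3) (hE : (Efin σ).card = q)
    (hψE : ∀ z, ∑ e ∈ Efin σ, ψ (e * z) = if trS σ z = 0 then ((Efin σ).card : ℂ) else 0) (z : F) :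
    ∑ v ∈ Vfin σ, ψ (v * z) = if σ z = z then (q : ℂ) ^ 2 else 0 := by
  have hq' : (q : ℂ) ≠ 0 := by exact_mod_cast hq
  apply mul_left_cancel₀ hq'
  have : (q : ℂ) * ∑ v ∈ Vfin σ, ψ (v * z) = ∑ v, ∑ e ∈ Efin σ, ψ (v * (e + z)) := by
    rw [Vfin, sum_filter, mul_sum]
    refine sum_congr rfl fun v _ => ?_
    have : ∀ e ∈ Efin σ, ψ (v * (e + z)) = ψ (e * v) * ψ (v * z) := by
      intro e _
      rw [← AddChar.map_add_eq_mul]; congr 1; ring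
    rw [sum_congr rfl this, ← sum_mul, hψE, hE]
    split_ifs <;> simp
  rw [this, sum_comm]
  simp only [B1 ψ hψ, hF]
  have h0 : ∀ e : F, e + z = 0 ↔ e = z := fun e => CharTwo.add_eq_zero
  simp only [h0]
  rw [sum_ite_eq']
  simp only [Efin, mem_filter, mem_univ, true_and]
  split_ifs
  · push_cast; ring
  · simp

/-- Fourier transform on `G`. -/
def hat (ψ : AddChar F ℂ) (h : G → ℂ) (b : G) : ℂ :=
  ∑ x, h x * ψ (Algebra.trace F G (b * x))

theorem B3 (ψ : AddChar F ℂ) (hψ : ψ.IsPrimitive) (b : G) :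
    ∑ x, ψ (Algebra.trace F G (b * x)) = if b = 0 then (Fintype.card G : ℂ) else 0 := by
  let χ : AddChar G ℂ := 
    { toFun := fun x => ψ (Algebra.trace F G x)
      map_zero_eq_one' := by simp
      map_add_eq_mul' := by
        intro x y
        rw [map_add, AddChar.map_add_eq_mul] }
  have hχ : ∀ x, χ x = ψ (Algebra.trace F G x) := fun x => rfl
  have hne : χ ≠ 1 := by
    intro h
    have := Module.Finite.of_finite (R := F) (M := G)
    have hs : Function.Surjective (Algebra.trace F G) := Algebra.trace_surjective F G
    apply hψ one_ne_zero
    ext a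
    obtain ⟨x, rfl⟩ := hs a
    have h2 : χ x = 1 := by rw [h]; rfl
    rw [hχ] at h2
    simpa using h2
  have := B1 χ (AddChar.IsPrimitive.of_ne_one hne) b
  rw [← this]
  refine sum_congr rfl fun x _ => ?_
  rw [hχ, mul_comm]

theorem hat_hat [CharP G 2] (ψ : AddChar F ℂ) (hψ : ψ.IsPrimitive) (h : G → ℂ) (x : G) :
    hat ψ (hat ψ h) x = Fintype.card G * h x := by
  simp only [hat, sum_mul]
  rw [sum_comm]
  have : ∀ y : G, ∑ b, h y * ψ (Algebra.trace F G (b * y)) * ψ (Algebra.trace F G (x * b)) =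
      if y = x then Fintype.card G * h y else 0 := by
    intro y
    have e : ∀ b, h y * ψ (Algebra.trace F G (b * y)) * ψ (Algebra.trace F G (x * b)) =
        h y * ψ (Algebra.trace F G ((y + x) * b)) := by
      intro b
      rw [mul_assoc, ← AddChar.map_add_eq_mul, ← map_add]
      congr 3; ring
    simp only [e]
    rw [← mul_sum, B3 ψ hψ]
    have h0 : y + x = 0 ↔ y = x := CharTwo.add_eq_zero
    simp only [h0]
    split_ifs <;> ring
  simp only [this]
  simp

/-- Convolution. -/
def cnv (h g : G → ℂ) (d : G) : ℂ := ∑ z, h z * g (d + z)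

theorem hat_cnv [CharP G 2] (ψ : AddChar F ℂ) (h g : G → ℂ) (b : G) :
    hat ψ (cnv h g) b = hat ψ h b * hat ψ g b := by
  simp only [hat, cnv, sum_mul]
  rw [sum_comm]
  refine sum_congr rfl fun z _ => ?_
  rw [mul_sum]
  refine Fintype.sum_equiv (Equiv.addRight z) _ _ fun d => ?_
  simp only [Equiv.coe_addRight]
  have : b * d = b * z + b * (d + z) := by
    have : (2 : G) = 0 := CharTwo.two_eq_zero
    linear_combination (- b * z) * this
  rw [this, map_add, AddChar.map_add_eq_mul]
  ring

theorem B4a [CharP F 2] (ψ : AddChar F ℂ) (hψ : ψ.IsPrimitive) (q : ℕ) (hq : 2 ≤ q)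
    (hF : Fintype.card F = q ^ 3) (hG : Fintype.card G = q ^ 6) (c : F) (hc : c ≠ 0) :
    ∑ x : G, ψ (Algebra.norm F x * c) = - (q : ℂ) ^ 3 := by
  have hind : ∀ c : F, c ≠ 0 → ∑ x : G, ψ (Algebra.norm F x * c) = ∑ x : G, ψ (Algebra.norm F x) := by
    intro c hc
    obtain ⟨d, hd⟩ := FiniteField.norm_surjective F G c
    have hd0 : d ≠ 0 := by
      rintro rfl
      have := Module.Finite.of_finite (R := F) (M := G)
      simp at hd
      exact hc hd.symm
    refine Fintype.sum_equiv (Equiv.mulRight₀ d hd0) _ _ fun x => ?_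
    simp [hd]
  have hsum : ∑ c : F, ∑ x : G, ψ (Algebra.norm F x * c) = (q : ℂ) ^ 3 := by
    rw [sum_comm]
    have e : ∀ x : G, ∑ c : F, ψ (Algebra.norm F x * c) = if x = 0 then (q : ℂ) ^ 3 else 0 := by
      intro x
      have := B1 ψ hψ (Algebra.norm F x)
      simp only [mul_comm] at this ⊢
      rw [this, hF]
      have := Module.Finite.of_finite (R := F) (M := G)
      simp [Algebra.norm_eq_zero_iff]
    simp only [e]
    simp
  rw [hind c hc]
  rw [← add_sum_erase _ _ (mem_univ 0), sum_congr rfl (fun c hc => hind c (by simpa using hc))] at hsum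
  simp only [mul_zero, AddChar.map_zero_eq_one, sum_const, card_univ, hG, card_erase_of_mem (mem_univ _), hF] at hsum
  have h1 : 1 ≤ q ^ 3 := Nat.one_le_pow _ _ (by omega)
  rw [nsmul_eq_mul, nsmul_eq_mul, Nat.cast_sub h1] at hsum
  push_cast at hsum
  have h2 : (q : ℂ) ^ 3 - 1 ≠ 0 := by
    have : (q : ℂ) ^ 3 ≠ 1 := by
      have : q ^ 3 ≠ 1 := by
        have : 2 ^ 3 ≤ q ^ 3 := Nat.pow_le_pow_left hq 3
        omega
      exact_mod_cast this
    exact sub_ne_zero.mpr this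
  apply mul_left_cancel₀ h2
  linear_combination hsum

theorem B4 [CharP F 2] (τ : G →+* G) (hτ : ∀ x, τ (τ x) = x)
    (hN : ∀ x : G, algebraMap F G (Algebra.norm F x) = x * τ x)
    (hT : ∀ x : G, algebraMap F G (Algebra.trace F G x) = x + τ x)
    (hτF : ∀ a : F, τ (algebraMap F G a) = algebraMap F G a)
    (ψ : AddChar F ℂ) (hψ : ψ.IsPrimitive) (q : ℕ) (hq : 2 ≤ q)
    (hF : Fintype.card F = q ^ 3) (hG : Fintype.card G = q ^ 6) (c : F) (b : G) :
    ∑ x : G, ψ (c * Algebra.norm F x) * ψ (Algebra.trace F G (b * x)) =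
      if c = 0 then (if b = 0 then (q : ℂ) ^ 6 else 0) else - (q : ℂ) ^ 3 * ψ (Algebra.norm F b / c) := by
  split_ifs with hc hb
  · subst hc; subst hb; simp [hG]
  · subst hc
    simp [B3 ψ hψ, hb]
  · rw [← B4a ψ hψ q hq hF hG c hc, sum_mul]
    have hc' : algebraMap F G c ≠ 0 := by simpa using hc
    refine Fintype.sum_equiv (Equiv.addRight (τ b / algebraMap F G c)) _ _ fun x => ?_
    rw [← AddChar.map_add_eq_mul, ← AddChar.map_add_eq_mul]
    congr 1
    apply (algebraMap F G).injective
    simp only [map_add, map_mul, map_div₀, hN, hT, hτ, hτF, Equiv.coe_addRight]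
    have : (2 : G) = 0 := by
      have : (2 : F) = 0 := CharTwo.two_eq_zero
      have := congrArg (algebraMap F G) this
      rw [map_ofNat, map_zero] at this
      exact this
    field_simp
    linear_combination (- b * τ b) * this

/-- delta -/
def dl (x : G) : ℂ := if x = 0 then 1 else 0
/-- trace zero norm -/
def rr (F : Type*) {G : Type*} [Field F] [Field G] [Algebra F G] (σ : F →+* F) (x : G) : ℂ :=
  if trS σ (Algebra.norm F x) = 0 then 1 else 0
/-- norm in E -/
def kk (F : Type*) {G : Type*} [Field F] [Field G] [Algebra F G] (σ : F →+* F) (x : G) : ℂ :=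
  if σ (Algebra.norm F x) = Algebra.norm F x then 1 else 0
/-- counting function -/
def gg (F : Type*) {G : Type*} [Field F] [Fintype F] [Field G] [Algebra F G] (σ : F →+* F) (x : G) : ℂ :=
  ∑ v ∈ (Vfin σ).erase 0, if trS σ (Algebra.norm F x / v) = 0 then 1 else 0

theorem hat_dl (ψ : AddChar F ℂ) (b : G) : hat ψ dl b = 1 := by
  simp [hat, dl]

theorem hat_one (ψ : AddChar F ℂ) (hψ : ψ.IsPrimitive) (q : ℕ) (hG : Fintype.card G = q ^ 6) (b : G) :
    hat ψ (fun _ => 1) b = (q : ℂ) ^ 6 * dl b := by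
  simp [hat, dl, B3 ψ hψ, hG]

theorem hat_rr [CharP F 2] (τ : G →+* G) (hτ : ∀ x, τ (τ x) = x)
    (hN : ∀ x : G, algebraMap F G (Algebra.norm F x) = x * τ x)
    (hT : ∀ x : G, algebraMap F G (Algebra.trace F G x) = x + τ x)
    (hτF : ∀ a : F, τ (algebraMap F G a) = algebraMap F G a)
    (ψ : AddChar F ℂ) (hψ : ψ.IsPrimitive) (q : ℕ) (hq : 2 ≤ q)
    (hF : Fintype.card F = q ^ 3) (hG : Fintype.card G = q ^ 6)
    (σ : F →+* F) (hE : (Efin σ).card = q)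
    (hψE : ∀ z, ∑ e ∈ Efin σ, ψ (e * z) = if trS σ z = 0 then ((Efin σ).card : ℂ) else 0) (b : G) :
    hat ψ (rr F σ) b = (q : ℂ) ^ 5 * dl b - (q : ℂ) ^ 3 * rr F σ b + (q : ℂ) ^ 2 := by
  have hq' : (q : ℂ) ≠ 0 := by
    have : q ≠ 0 := by omega
    exact_mod_cast this
  have h0 : (0 : F) ∈ Efin σ := by simp [Efin]
  apply mul_left_cancel₀ hq'
  have e1 : (q : ℂ) * hat ψ (rr F σ) b =
      ∑ e ∈ Efin σ, ∑ x : G, ψ (e * Algebra.norm F x) * ψ (Algebra.trace F G (b * x)) := by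
    rw [sum_comm, hat, mul_sum]
    refine sum_congr rfl fun x _ => ?_
    rw [← sum_mul, hψE, hE, rr]
    split_ifs <;> ring
  have e2 : ∑ e ∈ (Efin σ).erase 0, ψ (Algebra.norm F b / e) = q * rr F σ b - 1 := by
    have : ∑ e ∈ (Efin σ).erase 0, ψ (Algebra.norm F b / e) = ∑ e ∈ (Efin σ).erase 0, ψ (e * Algebra.norm F b) := by
      refine sum_bij' (fun e _ => e⁻¹) (fun e _ => e⁻¹) ?_ ?_ ?_ ?_ ?_
      · intro e he; simp [Efin] at he ⊢; exact he
      · intro e he; simp [Efin] at he ⊢; exact he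
      · intro e he; simp
      · intro e he; simp
      · intro e he; congr 1; field_simp
    rw [this, sum_erase_eq_sub h0, hψE, hE, rr]
    simp
  rw [e1, ← add_sum_erase _ _ h0]
  simp only [B4 τ hτ hN hT hτF ψ hψ q hq hF hG]
  rw [sum_congr rfl (g := fun e => - (q : ℂ) ^ 3 * ψ (Algebra.norm F b / e))
    (fun e he => if_neg (by simpa using (mem_erase.mp he).1)), ← mul_sum, e2, dl]
  simp only [if_true]
  split_ifs <;> ring

theorem hat_gg [CharP F 2] (τ : G →+* G) (hτ : ∀ x, τ (τ x) = x)
    (hN : ∀ x : G, algebraMap F G (Algebra.norm F x) = x * τ x)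
    (hT : ∀ x : G, algebraMap F G (Algebra.trace F G x) = x + τ x)
    (hτF : ∀ a : F, τ (algebraMap F G a) = algebraMap F G a)
    (ψ : AddChar F ℂ) (hψ : ψ.IsPrimitive) (q : ℕ) (hq : 2 ≤ q)
    (hF : Fintype.card F = q ^ 3) (hG : Fintype.card G = q ^ 6)
    (σ : F →+* F) (hE : (Efin σ).card = q)
    (hψE : ∀ z, ∑ e ∈ Efin σ, ψ (e * z) = if trS σ z = 0 then ((Efin σ).card : ℂ) else 0) (b : G) :
    hat ψ (gg F σ) b = (((Vfin σ).erase 0).card : ℂ) * (q : ℂ) ^ 5 * dl b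
      - (q : ℂ) ^ 2 * (q - 1) * ((q : ℂ) ^ 2 * kk F σ b - 1) := by
  have hq' : (q : ℂ) ≠ 0 := by
    have : q ≠ 0 := by omega
    exact_mod_cast this
  have h0 : (0 : F) ∈ Efin σ := by simp [Efin]
  have h0V : (0 : F) ∈ Vfin σ := by
    refine mem_filter.mpr ⟨mem_univ _, ?_⟩
    simp only [trS, map_zero, add_zero]
  apply mul_left_cancel₀ hq'
  have e1 : (q : ℂ) * hat ψ (gg F σ) b =
      ∑ v ∈ (Vfin σ).erase 0, ∑ e ∈ Efin σ, ∑ x : G,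
        ψ ((e / v) * Algebra.norm F x) * ψ (Algebra.trace F G (b * x)) := by
    have : ∀ v ∈ (Vfin σ).erase 0, ∑ e ∈ Efin σ, ∑ x : G,
        ψ ((e / v) * Algebra.norm F x) * ψ (Algebra.trace F G (b * x)) =
        ∑ x : G, (q * (if trS σ (Algebra.norm F x / v) = 0 then 1 else 0)) *
          ψ (Algebra.trace F G (b * x)) := by
      intro v _
      rw [sum_comm]
      refine sum_congr rfl fun x _ => ?_
      rw [← sum_mul]
      congr 1
      have := hψE (Algebra.norm F x / v)
      rw [hE] at this
      simp only [mul_ite, mul_one, mul_zero]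
      rw [← this]
      refine sum_congr rfl fun e _ => ?_
      congr 1; ring
    rw [sum_congr rfl this, sum_comm, hat, mul_sum]
    refine sum_congr rfl fun x _ => ?_
    rw [← sum_mul, ← mul_sum, gg]
    ring
  have e2 : ∀ e ∈ (Efin σ).erase 0, ∑ v ∈ (Vfin σ).erase 0, ψ (Algebra.norm F b / (e / v)) =
      (q : ℂ) ^ 2 * kk F σ b - 1 := by
    intro e he
    have hee : e ≠ 0 ∧ σ e = e := by simpa [Efin] using he
    have : ∀ v ∈ (Vfin σ).erase 0, ψ (Algebra.norm F b / (e / v)) = ψ (v * (Algebra.norm F b / e)) := by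
      intro v hv
      have : v ≠ 0 := (mem_erase.mp hv).1
      congr 1; field_simp
    rw [sum_congr rfl this, sum_erase_eq_sub h0V, B2 σ ψ hψ q (by omega) hF hE hψE, kk]
    have : σ (Algebra.norm F b / e) = Algebra.norm F b / e ↔ σ (Algebra.norm F b) = Algebra.norm F b := by
      rw [map_div₀, hee.2, div_left_inj' hee.1]
    rw [if_congr this rfl rfl]
    simp
  rw [e1, sum_comm, ← add_sum_erase _ _ h0]
  simp only [B4 τ hτ hN hT hτF ψ hψ q hq hF hG]
  have e3 : ∀ e ∈ (Efin σ).erase 0, (∑ v ∈ (Vfin σ).erase 0, 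
      if e / v = 0 then (if b = 0 then (q : ℂ) ^ 6 else 0) else
        - (q : ℂ) ^ 3 * ψ (Algebra.norm F b / (e / v))) =
      - (q : ℂ) ^ 3 * ((q : ℂ) ^ 2 * kk F σ b - 1) := by
    intro e he
    rw [← e2 e he, mul_sum]
    refine sum_congr rfl fun v hv => ?_
    rw [if_neg (div_ne_zero (mem_erase.mp he).1 (mem_erase.mp hv).1)]
  rw [sum_congr rfl e3]
  simp only [zero_div, if_true, sum_const, nsmul_eq_mul]
  rw [card_erase_of_mem h0, hE, Nat.cast_sub (by omega), dl]
  push_cast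
  split_ifs <;> ring

/-- The span of the four functions. -/
def InW (F : Type*) {G : Type*} [Field F] [Fintype F] [Field G] [Algebra F G] (σ : F →+* F)
    (h : G → ℂ) : Prop :=
  ∃ a b c d : ℂ, ∀ x, h x = a * dl x + b + c * rr F σ x + d * gg F σ x

/-- The dual span. -/
def InW' (F : Type*) {G : Type*} [Field F] [Fintype F] [Field G] [Algebra F G] (σ : F →+* F)
    (h : G → ℂ) : Prop :=
  ∃ a b c d : ℂ, ∀ x, h x = a * dl x + b + c * rr F σ x + d * kk F σ x

theorem hat_lin (ψ : AddChar F ℂ) (a b c d : ℂ) (h f1 f2 f3 : G → ℂ)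
    (hh : ∀ x, h x = a * f1 x + b + c * f2 x + d * f3 x) (y : G) :
    hat ψ h y = a * hat ψ f1 y + b * hat ψ (fun _ => 1) y + c * hat ψ f2 y + d * hat ψ f3 y := by
  simp only [hat, hh, mul_sum, ← sum_add_distrib]
  refine sum_congr rfl fun x _ => ?_
  ring

theorem B_main [CharP F 2] [CharP G 2] (τ : G →+* G) (hτ : ∀ x, τ (τ x) = x)
    (hN : ∀ x : G, algebraMap F G (Algebra.norm F x) = x * τ x)
    (hT : ∀ x : G, algebraMap F G (Algebra.trace F G x) = x + τ x)
    (hτF : ∀ a : F, τ (algebraMap F G a) = algebraMap F G a)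
    (q : ℕ) (hq : 2 ≤ q)
    (hF : Fintype.card F = q ^ 3) (hG : Fintype.card G = q ^ 6)
    (σ : F →+* F) (h3 : ∀ x, σ (σ (σ x)) = x) (hE : (Efin σ).card = q)
    (h1 h2 : G → ℂ) (H1 : InW F σ h1) (H2 : InW F σ h2) : InW F σ (cnv h1 h2) := by
  obtain ⟨ψ, hψ, hψE⟩ := B0 σ h3
  have Hd := hat_dl (G := G) ψ
  have H1' := hat_one (G := G) ψ hψ q hG
  have Hr := hat_rr τ hτ hN hT hτF ψ hψ q hq hF hG σ hE hψE
  have Hg := hat_gg τ hτ hN hT hτF ψ hψ q hq hF hG σ hE hψE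
  have hq' : (q : ℂ) ≠ 0 := by
    have : q ≠ 0 := by omega
    exact_mod_cast this
  have hq1 : (q : ℂ) - 1 ≠ 0 := by
    have : q ≠ 1 := by omega
    exact sub_ne_zero.mpr (by exact_mod_cast this)
  set K : ℂ := (((Vfin σ).erase 0).card : ℂ)
  have toW' : ∀ h : G → ℂ, InW F σ h → InW' F σ (hat ψ h) := by
    rintro h ⟨a, b, c, d, hh⟩
    refine ⟨b * q ^ 6 + c * q ^ 5 + d * K * q ^ 5, a + c * q ^ 2 + d * q ^ 2 * (q - 1), - c * q ^ 3,
      - d * q ^ 4 * (q - 1), fun x => ?_⟩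
    rw [hat_lin ψ a b c d h _ _ _ hh, Hd, H1', Hr, Hg]
    ring
  have hatk : ∀ x, hat ψ (kk F σ : G → ℂ) x = (- 1 / (q ^ 4 * (q - 1)) : ℂ) *
      (q ^ 6 * gg F σ x - K * q ^ 5 - q ^ 2 * (q - 1) * (q ^ 6 * dl x)) := by
    intro x
    have e : ∀ x : G, hat ψ (gg F σ) x = K * q ^ 5 * dl x + q ^ 2 * (q - 1) + 0 * dl x +
        (- q ^ 4 * (q - 1)) * kk F σ x := by
      intro x; rw [Hg]; ring
    have := hat_lin ψ _ _ _ _ _ _ _ _ e x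
    rw [hat_hat ψ hψ, hG, Hd, H1'] at this
    push_cast at this
    have hne : (q : ℂ) ^ 4 * (q - 1) ≠ 0 := mul_ne_zero (pow_ne_zero _ hq') hq1
    rw [div_mul_eq_mul_div, eq_div_iff hne]
    linear_combination this
  have toW : ∀ h : G → ℂ, InW' F σ h → InW F σ (hat ψ h) := by
    rintro h ⟨a, b, c, d, hh⟩
    refine ⟨b * q ^ 6 + c * q ^ 5 + d * q ^ 4, a + c * q ^ 2 + d * K * q / (q - 1), - c * q ^ 3,
      - d * q ^ 2 / (q - 1), fun x => ?_⟩
    rw [hat_lin ψ a b c d h _ _ _ hh, Hd, H1', Hr, hatk]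
    field_simp
    ring
  have hfin : Module.Finite F G := Module.Finite.of_finite
  have mulW' : ∀ h g : G → ℂ, InW' F σ h → InW' F σ g → InW' F σ (fun x => h x * g x) := by
    rintro h g ⟨a, b, c, d, hh⟩ ⟨a', b', c', d', hg⟩
    refine ⟨a * a' + a * b' + b * a' + a * c' + c * a' + a * d' + d * a' + c * d' + d * c', b * b',
      b * c' + c * b' + c * c', b * d' + d * b' + d * d', fun x => ?_⟩
    simp only [hh, hg]
    have p1 : (dl x : ℂ) * dl x = dl x := by unfold dl; split_ifs <;> simp
    have p2 : (rr F σ x : ℂ) * rr F σ x = rr F σ x := by unfold rr; split_ifs <;> simp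
    have p3 : (kk F σ x : ℂ) * kk F σ x = kk F σ x := by unfold kk; split_ifs <;> simp
    have p4 : (dl x : ℂ) * rr F σ x = dl x := by
      unfold dl; split_ifs with hx
      · simp [hx, rr, trS]
      · simp
    have p5 : (dl x : ℂ) * kk F σ x = dl x := by
      unfold dl; split_ifs with hx
      · simp [hx, kk]
      · simp
    have p6 : (rr F σ x : ℂ) * kk F σ x = dl x := by
      by_cases hx : x = 0
      · simp [hx, kk, rr, dl, trS]
      · unfold rr kk dl
        rw [if_neg hx]
        by_cases hk : σ (Algebra.norm F x) = Algebra.norm F x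
        · rw [trS_E σ _ hk, if_neg (by simpa [Algebra.norm_eq_zero_iff] using hx)]
          simp
        · simp [hk]
    linear_combination a * a' * p1 + c * c' * p2 + d * d' * p3 + (a * c' + c * a') * p4 +
      (a * d' + d * a') * p5 + (c * d' + d * c') * p6
  have := toW _ (mulW' _ _ (toW' _ H1) (toW' _ H2))
  have e : (fun x => hat ψ h1 x * hat ψ h2 x) = hat ψ (cnv h1 h2) := by
    funext x; rw [hat_cnv]
  rw [e] at this
  obtain ⟨a, b, c, d, hh⟩ := this
  refine ⟨a / q ^ 6, b / q ^ 6, c / q ^ 6, d / q ^ 6, fun x => ?_⟩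
  have := hh x
  rw [hat_hat ψ hψ, hG] at this
  push_cast at this
  field_simp
  linear_combination this

end PartB
section PartC

open Finset Classical

set_option linter.unusedSectionVars false

variable {F G : Type*} [Field F] [Fintype F] [Field G] [Fintype G] [Algebra F G]

theorem gg_eq (σ : F →+* F) (x : G) : gg F σ x = ((Pset σ (Algebra.norm F x)).ncard : ℂ) := by
  rw [gg, Finset.sum_boole]
  congr 1
  rw [← Set.ncard_coe_finset]
  congr 1
  ext v
  have hV : v ∈ Vfin σ ↔ trS σ v = 0 := by simp only [Vfin, mem_filter, mem_univ, true_and]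
  rw [mem_coe, mem_filter, mem_erase, hV]
  simp only [trS, Pset, and_assoc, Set.mem_setOf_eq]

theorem C_final [CharP F 2] [CharP G 2] (τ : G →+* G) (hτ : ∀ x, τ (τ x) = x)
    (hN : ∀ x : G, algebraMap F G (Algebra.norm F x) = x * τ x)
    (hT : ∀ x : G, algebraMap F G (Algebra.trace F G x) = x + τ x)
    (hτF : ∀ a : F, τ (algebraMap F G a) = algebraMap F G a)
    (q : ℕ) (hq : 2 ≤ q)
    (hF : Fintype.card F = q ^ 3) (hG : Fintype.card G = q ^ 6)
    (σ : F →+* F) (h3 : ∀ x, σ (σ (σ x)) = x) (hE : (Efin σ).card = q)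
    (hE' : {e : F | σ e = e ∧ e ≠ 0}.ncard = q - 1)
    (R : Fin 4 → Set G)
    (R0 : ∀ x, x ∈ R 0 ↔ x = 0)
    (R1 : ∀ x, x ∈ R 1 ↔ x ≠ 0 ∧ (Pset σ (Algebra.norm F x)).ncard = q - 1)
    (R2 : ∀ x, x ∈ R 2 ↔ x ≠ 0 ∧ (Pset σ (Algebra.norm F x)).ncard = 2 * (q - 1))
    (R3 : ∀ x, x ∈ R 3 ↔ x ≠ 0 ∧ (Pset σ (Algebra.norm F x)).ncard = 0) :
    (∀ x : G, ∃! k : Fin 4, x ∈ R k) ∧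
    ∃ p : Fin 4 → Fin 4 → Fin 4 → ℕ,
      ∀ k l m : Fin 4, ∀ d ∈ R m, {z : G | z ∈ R k ∧ d + z ∈ R l}.ncard = p k l m := by
  have hfin : Module.Finite F G := Module.Finite.of_finite
  have trich : ∀ x : G, x ≠ 0 →
      ((trS σ (Algebra.norm F x) = 0 ∧ (Pset σ (Algebra.norm F x)).ncard = q - 1) ∨
      (trS σ (Algebra.norm F x) ≠ 0 ∧ ((Pset σ (Algebra.norm F x)).ncard = 0 ∨
        (Pset σ (Algebra.norm F x)).ncard = 2 * (q - 1)))) := by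
    intro x hx
    exact A5_card σ h3 _ (by simpa [Algebra.norm_eq_zero_iff] using hx) (q - 1) hE'
  refine ⟨?_, ?_⟩
  · intro x
    by_cases hx : x = 0
    · refine ⟨0, (R0 x).2 hx, ?_⟩
      intro k hk
      fin_cases k
      · rfl
      · exact absurd hx ((R1 x).1 hk).1
      · exact absurd hx ((R2 x).1 hk).1
      · exact absurd hx ((R3 x).1 hk).1
    · rcases trich x hx with ⟨_, h⟩ | ⟨_, h | h⟩
      · refine ⟨1, (R1 x).2 ⟨hx, h⟩, ?_⟩
        intro k hk
        fin_cases k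
        · exact absurd ((R0 x).1 hk) hx
        · rfl
        · have := ((R2 x).1 hk).2; omega
        · have := ((R3 x).1 hk).2; omega
      · refine ⟨3, (R3 x).2 ⟨hx, h⟩, ?_⟩
        intro k hk
        fin_cases k
        · exact absurd ((R0 x).1 hk) hx
        · have := ((R1 x).1 hk).2; omega
        · have := ((R2 x).1 hk).2; omega
        · rfl
      · refine ⟨2, (R2 x).2 ⟨hx, h⟩, ?_⟩
        intro k hk
        fin_cases k
        · exact absurd ((R0 x).1 hk) hx
        · have := ((R1 x).1 hk).2; omega
        · rfl
        · have := ((R3 x).1 hk).2; omega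
  · -- indicator functions
    have hn0 : ((q - 1 : ℕ) : ℂ) ≠ 0 := by
      have : q - 1 ≠ 0 := by omega
      exact_mod_cast this
    set n : ℕ := q - 1 with hn
    have hnpos : 0 < n := by omega
    let ind : Fin 4 → G → ℂ := fun k x => if x ∈ R k then 1 else 0
    have i0 : ∀ x, ind 0 x = dl x := by
      intro x; simp only [ind, dl, R0]
    have i1 : ∀ x, ind 1 x = rr F σ x - dl x := by
      intro x
      simp only [ind, dl, R1, rr]
      by_cases hx : x = 0
      · simp [hx, trS]
      · rcases trich x hx with ⟨h1, h2⟩ | ⟨h1, h2⟩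
        · simp [hx, h1, h2]
        · have : (Pset σ (Algebra.norm F x)).ncard ≠ n := by omega
          simp [hx, h1, this]
    set K : ℂ := gg F σ (0 : G) with hK
    have i2 : ∀ x, ind 2 x = (1 / (2 * n)) * (gg F σ x - K * dl x - n * (rr F σ x - dl x)) := by
      intro x
      rw [← i1]
      simp only [ind, dl, R2, R1]
      by_cases hx : x = 0
      · simp [hx, hK]
      · rw [gg_eq]
        rcases trich x hx with ⟨h1, h2⟩ | ⟨h1, h2 | h2⟩
        · have : n ≠ 2 * n := by omega
          simp [hx, h2, this]
        · have : 0 ≠ 2 * n := by omega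
          have h' : 0 ≠ n := by omega
          have h'' : n ≠ 0 := by omega
          simp [hx, h2, h', h'']
        · have : 2 * n ≠ n := by omega
          simp [hx, h2, this]
          field_simp
    have i3 : ∀ x, ind 3 x = 1 - ind 0 x - ind 1 x - ind 2 x := by
      intro x
      simp only [ind, R0, R1, R2, R3]
      by_cases hx : x = 0
      · simp [hx]
      · rcases trich x hx with ⟨h1, h2⟩ | ⟨h1, h2 | h2⟩
        · have : n ≠ 2 * n := by omega
          have h' : n ≠ 0 := by omega
          simp [hx, h2, this, h']
        · have : 0 ≠ 2 * n := by omega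
          have h' : 0 ≠ n := by omega
          have h'' : n ≠ 0 := by omega
          simp [hx, h2, h', h'']
        · have : 2 * n ≠ n := by omega
          have h' : 2 * n ≠ 0 := by omega
          simp [hx, h2, this, h']
    have hW : ∀ k, InW F σ (ind k) := by
      intro k
      fin_cases k
      · exact ⟨1, 0, 0, 0, fun x => by change ind 0 x = _; rw [i0 x]; ring⟩
      · exact ⟨-1, 0, 1, 0, fun x => by change ind 1 x = _; rw [i1 x]; ring⟩
      · exact ⟨(1 / (2 * n)) * (n - K), 0, - (1 / (2 * n)) * n, 1 / (2 * n), fun x => by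
          change ind 2 x = _; rw [i2 x]; ring⟩
      · exact ⟨- (1 / (2 * n)) * (n - K), 1, -1 + (1 / (2 * n)) * n, - (1 / (2 * n)), fun x => by
          change ind 3 x = _; rw [i3 x, i0, i1, i2]; ring⟩
    have hcount : ∀ k l d, cnv (ind k) (ind l) d = ({z : G | z ∈ R k ∧ d + z ∈ R l}.ncard : ℂ) := by
      intro k l d
      have : {z : G | z ∈ R k ∧ d + z ∈ R l} =
          ((univ.filter (fun z => z ∈ R k ∧ d + z ∈ R l) : Finset G) : Set G) := by
        ext z; simp
      rw [this, Set.ncard_coe_finset, ← Finset.sum_boole, cnv]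
      refine sum_congr rfl fun z _ => ?_
      simp only [ind]
      by_cases h1 : z ∈ R k <;> by_cases h2 : d + z ∈ R l <;> simp [h1, h2]
    have hconst : ∀ m, ∀ d ∈ R m, ∀ d' ∈ R m, ∀ h : G → ℂ, InW F σ h → h d = h d' := by
      intro m d hd d' hd' h ⟨a, b, c, e, hh⟩
      have gen : ∀ N, (d ≠ 0 ∧ (Pset σ (Algebra.norm F d)).ncard = N) →
          (d' ≠ 0 ∧ (Pset σ (Algebra.norm F d')).ncard = N) → h d = h d' := by
        rintro N ⟨h1, h2⟩ ⟨h1', h2'⟩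
        have t := trich d h1
        have t' := trich d' h1'
        have : trS σ (Algebra.norm F d) = 0 ↔ trS σ (Algebra.norm F d') = 0 := by
          rw [h2] at t
          rw [h2'] at t'
          constructor
          · intro h
            by_contra h'
            simp only [h, h', ne_eq, not_true, false_and, not_false_eq_true, true_and, or_false,
              false_or] at t t'
            omega
          · intro h
            by_contra h'
            simp only [h, h', ne_eq, not_true, false_and, not_false_eq_true, true_and, or_false,
              false_or] at t t'
            omega
        rw [hh, hh, gg_eq, gg_eq, h2, h2']
        simp [dl, rr, h1, h1', this]
      fin_cases m
      · rw [(R0 d).1 hd, (R0 d').1 hd']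
      · exact gen _ ((R1 d).1 hd) ((R1 d').1 hd')
      · exact gen _ ((R2 d).1 hd) ((R2 d').1 hd')
      · exact gen _ ((R3 d).1 hd) ((R3 d').1 hd')
    refine ⟨fun k l m => if h : (R m).Nonempty then
      {z : G | z ∈ R k ∧ h.some + z ∈ R l}.ncard else 0, ?_⟩
    intro k l m d hd
    have hne : (R m).Nonempty := ⟨d, hd⟩
    simp only
    rw [dif_pos hne]
    have := hconst m d hd _ hne.some_mem _
      (B_main τ hτ hN hT hτF q hq hF hG σ h3 hE _ _ (hW k) (hW l))
    rw [hcount, hcount] at this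
    exact_mod_cast this

theorem C_cardE (σ : F →+* F) (q : ℕ) (hq : 2 ≤ q) (hF : Fintype.card F = q ^ 3)
    (hσ : ∀ x, σ x = x ^ q) : {e : F | σ e = e ∧ e ≠ 0}.ncard = q - 1 ∧ (Efin σ).card = q := by
  have h1 : {e : F | σ e = e ∧ e ≠ 0}.ncard = q - 1 := by
    have h := IsCyclic.card_powMonoidHom_ker (G := Fˣ) (q - 1)
    rw [Nat.card_units, Nat.card_eq_fintype_card (α := F), hF] at h
    have hg : (q ^ 3 - 1).gcd (q - 1) = q - 1 := by
      apply Nat.gcd_eq_right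
      simpa using Nat.sub_dvd_pow_sub_pow q 1 3
    rw [hg] at h
    rw [← h]
    have : {e : F | σ e = e ∧ e ≠ 0} =
        (fun u : Fˣ => (u : F)) '' ((powMonoidHom (q - 1) : Fˣ →* Fˣ).ker : Set Fˣ) := by
      ext e
      simp only [Set.mem_setOf_eq, Set.mem_image, SetLike.mem_coe, MonoidHom.mem_ker,
        powMonoidHom_apply]
      have hq1 : q = (q - 1) + 1 := by omega
      constructor
      · rintro ⟨he, h0⟩
        refine ⟨Units.mk0 e h0, ?_, rfl⟩
        ext
        simp only [Units.val_pow_eq_pow_val, Units.val_mk0, Units.val_one]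
        rw [hσ, hq1, pow_succ] at he
        exact mul_right_cancel₀ h0 (by rw [he, one_mul])
      · rintro ⟨u, hu, rfl⟩
        refine ⟨?_, u.ne_zero⟩
        rw [hσ, hq1, pow_succ, ← Units.val_pow_eq_pow_val, hu]
        simp
    rw [this, Set.ncard_image_of_injective _ Units.val_injective]
    rfl
  refine ⟨h1, ?_⟩
  have : {e : F | σ e = e ∧ e ≠ 0} = (((Efin σ).erase 0 : Finset F) : Set F) := by
    ext e; simp [Efin, and_comm]
  rw [this, Set.ncard_coe_finset, card_erase_of_mem (by simp [Efin])] at h1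
  have : 0 < (Efin σ).card := card_pos.mpr ⟨0, by simp [Efin]⟩
  omega

theorem trFE_eq (σ : F →+* F) (s : ℕ) (hσ : ∀ x, σ x = x ^ 2 ^ s) (x : F) :
    trFE s x = x + σ x + σ (σ x) := by
  rw [trFE, hσ, hσ, ← pow_mul, ← pow_add, two_mul]

theorem Sa_card (σ : F →+* F) (h3 : ∀ x, σ (σ (σ x)) = x) (s : ℕ) (hσ : ∀ x, σ x = x ^ 2 ^ s)
    (ω : F) (a : ℤ) (y : F) (e : F) (he : σ e = e) (he0 : e ≠ 0) (hy : y = ω ^ a * e) :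
    (Sa s ω a).ncard = (Pset σ y).ncard := by
  have : Sa s ω a = (fun v => v⁻¹) '' Pset σ y := by
    ext u
    have hmem : u ∈ (fun v => v⁻¹) '' Pset σ y ↔ u⁻¹ ∈ Pset σ y := by
      constructor
      · rintro ⟨v, hv, rfl⟩; simpa using hv
      · intro h; exact ⟨_, h, by simp⟩
    rw [hmem]
    simp only [Sa, Pset, Set.mem_setOf_eq, trFE_eq σ s hσ, ne_eq, inv_eq_zero]
    by_cases hu : u = 0
    · simp [hu]
    · have hu1 : σ u ≠ 0 := (map_ne_zero σ).mpr hu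
      have hu2 : σ (σ u) ≠ 0 := (map_ne_zero σ).mpr hu1
      have e1 : u ^ (2 ^ s + 1) = u * σ u := by rw [hσ, pow_succ, mul_comm]
      have e2 : u * σ u + σ (u * σ u) + σ (σ (u * σ u)) =
          (u * σ u * σ (σ u)) * (u⁻¹ + σ u⁻¹ + σ (σ u⁻¹)) := by
        simp only [map_mul, map_inv₀, h3]
        field_simp
        ring
      have e3 : y / u⁻¹ + σ (y / u⁻¹) + σ (σ (y / u⁻¹)) =
          e * (ω ^ a * u + σ (ω ^ a * u) + σ (σ (ω ^ a * u))) := by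
        rw [hy]
        simp only [div_inv_eq_mul, map_mul, he]
        ring
      rw [e1, e2, e3]
      simp [hu, hu1, he0]
  rw [this, Set.ncard_image_of_injective _ inv_injective]

theorem Rclass_mem (σ : F →+* F) (h3 : ∀ x, σ (σ (σ x)) = x) (s : ℕ) (hσ : ∀ x, σ x = x ^ 2 ^ s)
    (hF : Fintype.card F = 2 ^ (3 * s))
    (γ : G) (hγ0 : γ ≠ 0) (hγ : ∀ x : G, x ≠ 0 → ∃ n : ℕ, x = γ ^ n) (ω : F)
    (hω : ω = Algebra.norm F γ) (P : ℕ → Prop) (x : G) :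
    x ∈ Rclass s γ {i | P (Sa s ω (i.val : ℤ)).ncard} ↔
      x ≠ 0 ∧ P (Pset σ (Algebra.norm F x)).ncard := by
  have hfin : Module.Finite F G := Module.Finite.of_finite
  have hω0 : ω ≠ 0 := by rw [hω]; simpa [Algebra.norm_eq_zero_iff] using hγ0
  have hM : σ (ω ^ Mof s) = ω ^ Mof s := by
    have h : ω ^ (2 ^ (3 * s)) = ω := by rw [← hF]; exact FiniteField.pow_card ω
    rw [hσ, ← pow_mul]
    have : Mof s * 2 ^ s = 2 ^ (3 * s) + (2 ^ (2 * s) + 2 ^ s) := by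
      unfold Mof
      have : 2 ^ (3 * s) = 2 ^ (2 * s) * 2 ^ s := by rw [← pow_add]; congr 1; ring
      have h' : 2 ^ (2 * s) = 2 ^ s * 2 ^ s := by rw [← pow_add]; congr 1; ring
      rw [this, h']; ring
    rw [this, pow_add, h]
    unfold Mof
    ring
  have hz : ∀ k : ℤ, Algebra.norm F (γ ^ k) = ω ^ k := by
    intro k
    let φ : G →*₀ F := { Algebra.norm F with map_zero' := Algebra.norm_zero }
    have h : φ (γ ^ k) = φ γ ^ k := map_zpow₀ φ γ k
    rw [hω]
    exact h
  have key : ∀ (i t : ℤ), (Sa s ω i).ncard =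
      (Pset σ (Algebra.norm F (γ ^ (i + (Mof s : ℤ) * t)))).ncard := by
    intro i t
    apply Sa_card σ h3 s hσ ω i _ ((ω ^ Mof s) ^ t)
    · rw [map_zpow₀, hM]
    · exact zpow_ne_zero _ (pow_ne_zero _ hω0)
    · rw [hz, zpow_add₀ hω0, zpow_mul, zpow_natCast]
  have : NeZero (Mof s) := ⟨Nat.succ_ne_zero _⟩
  simp only [Rclass, cyc, Set.mem_iUnion, Set.mem_setOf_eq, exists_prop]
  constructor
  · rintro ⟨i, hi, t, rfl⟩
    refine ⟨zpow_ne_zero _ hγ0, ?_⟩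
    rw [← key]; exact hi
  · rintro ⟨hx, h⟩
    obtain ⟨n, rfl⟩ := hγ x hx
    have e : γ ^ n = γ ^ ((((n : ZMod (Mof s)).val : ℕ) : ℤ) + (Mof s : ℤ) * ((n / Mof s : ℕ) : ℤ)) := by
      rw [ZMod.val_natCast, ← zpow_natCast]
      congr 1
      exact_mod_cast (Nat.mod_add_div n (Mof s)).symm
    refine ⟨(n : ZMod (Mof s)), ?_, _, e⟩
    rw [key _ ((n / Mof s : ℕ) : ℤ), ← e]
    exact h

end PartC

theorem statement15 (s : ℕ) (hs : 1 ≤ s) (F G : Type*) [Field F] [Fintype F] [Field G] [Fintype G]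
    (hF : Fintype.card F = 2 ^ (3 * s)) (hG : Fintype.card G = 2 ^ (6 * s))
    (f : F →+* G) (γ : G) (hγ : ∀ x : G, x ≠ 0 → ∃ n : ℕ, x = γ ^ n)
    (ω : F) (hω : f ω = γ ^ (2 ^ (3 * s) + 1))
    (hωgen : ∀ x : F, x ≠ 0 → ∃ n : ℕ, x = ω ^ n) :
    (∀ x : G, ∃! k : Fin 4, x ∈ Rfam s ω γ k) ∧
    ∃ p : Fin 4 → Fin 4 → Fin 4 → ℕ,
      ∀ k l m : Fin 4, ∀ d ∈ Rfam s ω γ m,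
        {z : G | z ∈ Rfam s ω γ k ∧ d + z ∈ Rfam s ω γ l}.ncard = p k l m := by
  classical
  letI : Algebra F G := f.toAlgebra
  have hfin : Module.Finite F G := Module.Finite.of_finite
  have hmap : ∀ a, algebraMap F G a = f a := fun a => rfl
  haveI : Fact (Nat.Prime 2) := ⟨Nat.prime_two⟩
  haveI : CharP F 2 := charP_of_card_eq_prime_pow (f := 3 * s) (by simpa using hF)
  haveI : CharP G 2 := charP_of_card_eq_prime_pow (f := 6 * s) (by simpa using hG)
  have hq : 2 ≤ 2 ^ s := by
    calc 2 = 2 ^ 1 := rfl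
      _ ≤ 2 ^ s := Nat.pow_le_pow_right (by norm_num) hs
  have hF' : Fintype.card F = (2 ^ s) ^ 3 := by rw [hF, ← pow_mul]; congr 1; ring
  have hG' : Fintype.card G = (2 ^ s) ^ 6 := by rw [hG, ← pow_mul]; congr 1; ring
  let σ : F →+* F := iterateFrobenius F 2 s
  have hσ : ∀ x, σ x = x ^ 2 ^ s := fun x => iterateFrobenius_def 2 s x
  have h3 : ∀ x, σ (σ (σ x)) = x := by
    intro x
    rw [hσ, hσ, hσ, ← pow_mul, ← pow_mul]
    have : 2 ^ s * (2 ^ s * 2 ^ s) = Fintype.card F := by rw [hF']; ring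
    rw [this]
    exact FiniteField.pow_card x
  let τ : G →+* G := iterateFrobenius G 2 (3 * s)
  have hτ' : ∀ x, τ x = x ^ 2 ^ (3 * s) := fun x => iterateFrobenius_def 2 (3 * s) x
  have hτ : ∀ x, τ (τ x) = x := by
    intro x
    rw [hτ', hτ', ← pow_mul, ← pow_add]
    have : 2 ^ (3 * s + 3 * s) = Fintype.card G := by rw [hG]; congr 1; ring
    rw [this]
    exact FiniteField.pow_card x
  have hτF : ∀ a : F, τ (algebraMap F G a) = algebraMap F G a := by
    intro a
    rw [hτ', ← map_pow, ← hF, FiniteField.pow_card]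
  have hrank : Module.finrank F G = 2 := by
    have h := Module.card_eq_pow_finrank (K := F) (V := G)
    rw [hF, hG, ← pow_mul] at h
    have := Nat.pow_right_injective (le_refl 2) h
    nlinarith
  have hN : ∀ x : G, algebraMap F G (Algebra.norm F x) = x * τ x := by
    intro x
    rw [FiniteField.algebraMap_norm_eq_prod_pow, hrank, hτ']
    simp [Finset.prod_range_succ, hF]
  have hT : ∀ x : G, algebraMap F G (Algebra.trace F G x) = x + τ x := by
    intro x
    rw [FiniteField.algebraMap_trace_eq_sum_pow, hrank, hτ']
    simp [Finset.sum_range_succ, hF]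
  have hωN : ω = Algebra.norm F γ := by
    apply (algebraMap F G).injective
    rw [hN, hτ', hmap, hω]
    ring
  have hω0 : ω ≠ 0 := by
    intro h
    have hsub : ∀ x : F, x = 0 ∨ x = 1 := by
      intro x
      by_cases hx : x = 0
      · exact Or.inl hx
      · obtain ⟨n, hn⟩ := hωgen x hx
        rw [h] at hn
        rcases Nat.eq_zero_or_pos n with rfl | hn0
        · right; simpa using hn
        · rw [zero_pow (by omega)] at hn; exact absurd hn hx
    have hc : Fintype.card F ≤ 2 := by
      have : (Finset.univ : Finset F) ⊆ {0, 1} := by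
        intro x _
        simpa using hsub x
      exact (Finset.card_le_card this).trans Finset.card_le_two
    have : 2 ^ 3 ≤ (2 ^ s) ^ 3 := Nat.pow_le_pow_left hq 3
    omega
  have hγ0 : γ ≠ 0 := by
    rintro rfl
    apply hω0
    rw [hωN]
    simp
  obtain ⟨hE', hE⟩ := C_cardE σ (2 ^ s) hq hF' hσ
  refine C_final τ hτ hN hT hτF (2 ^ s) hq hF' hG' σ h3 hE hE' (Rfam s ω γ) ?_ ?_ ?_ ?_
  · intro x
    exact Iff.rfl
  · exact Rclass_mem σ h3 s hσ hF γ hγ0 hγ ω hωN (fun c => c = 2 ^ s - 1)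
  · exact Rclass_mem σ h3 s hσ hF γ hγ0 hγ ω hωN (fun c => c = 2 * (2 ^ s - 1))
  · exact Rclass_mem σ h3 s hσ hF γ hγ0 hγ ω hωN (fun c => c = 0)
end
end
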